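/- If (58, 4) is a universal pair over ℕ, then (11, 1681043235226619916301182624511918527834137733707408448335539840) is a universal pair over ℤ. -/

import Mathlib

/-- A set `𝒜 ⊆ ℕ` is Diophantine if there are `ν ∈ ℕ` and a polynomial
`P ∈ ℤ[X₀, …, X_ν]` such that `a ∈ 𝒜 ↔ ∃ z ∈ ℕ^ν, P(a, z) = 0`. -/
def IsDiophantine (A : Set ℕ) : Prop :=
  ∃ (ν : ℕ) (P : MvPolynomial (Fin (ν + 1)) ℤ),
    ∀ a : ℕ, a ∈ A ↔ ∃ z : Fin ν → ℕ,
      MvPolynomial.eval (Fin.cons (a : ℤ) (fun i => (z i : ℤ))) P = 0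

/-- `(ν, δ)` is a universal pair over `ℕ`: every Diophantine set is represented
by a polynomial with `ν` unknowns ranging over `ℕ` and total degree `≤ δ`. -/
def IsUniversalPairNat (ν δ : ℕ) : Prop :=
  ∀ A : Set ℕ, IsDiophantine A →
    ∃ P : MvPolynomial (Fin (ν + 1)) ℤ, P.totalDegree ≤ δ ∧
      ∀ a : ℕ, a ∈ A ↔ ∃ z : Fin ν → ℕ,
        MvPolynomial.eval (Fin.cons (a : ℤ) (fun i => (z i : ℤ))) P = 0

/-- `(ν, δ)` is a universal pair over `ℤ`: every Diophantine set is represented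
by a polynomial with `ν` unknowns ranging over `ℤ` and total degree `≤ δ`. -/
def IsUniversalPairInt (ν δ : ℕ) : Prop :=
  ∀ A : Set ℕ, IsDiophantine A →
    ∃ P : MvPolynomial (Fin (ν + 1)) ℤ, P.totalDegree ≤ δ ∧
      ∀ a : ℕ, a ∈ A ↔ ∃ z : Fin ν → ℤ,
        MvPolynomial.eval (Fin.cons (a : ℤ) z) P = 0


namespace UP
open Pell

theorem pell_eq_int {a : ℕ} (a1 : 1 < a) (n : ℕ) :
    (xn a1 n : ℤ) ^ 2 = ((a : ℤ) ^ 2 - 1) * (yn a1 n : ℤ) ^ 2 + 1 := by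
  have h := pell_eqz a1 n
  rw [dz_val] at h
  simp only [xz, yz, az] at h
  linarith

theorem pell_aux (d a X Y : ℕ) (h2 : (d : ℤ) = az a * az a - 1)
    (h : (X : ℤ) ^ 2 = ((a : ℤ) ^ 2 - 1) * (Y : ℤ) ^ 2 + 1) : X * X - d * Y * Y = 1 := by
  have : X * X = d * Y * Y + 1 := by
    zify
    rw [h2]
    simp only [az]
    linarith
  rw [this]; simp

theorem pell_of_sq {a : ℕ} (a1 : 1 < a) (x y : ℤ) (h : x ^ 2 = ((a : ℤ) ^ 2 - 1) * y ^ 2 + 1) :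
    ∃ n, x.natAbs = xn a1 n ∧ y.natAbs = yn a1 n := by
  apply eq_pell a1
  apply pell_aux _ a _ _ (dz_val a1)
  simpa using h

theorem yn_lower {a : ℕ} (a1 : 1 < a) (n : ℕ) :
    (2 * (a : ℤ) - 1) * yn a1 n ≤ yn a1 (n + 1) := by
  cases n with
  | zero => simp
  | succ n =>
    have h := yn_succ_succ a1 n
    have h2 : yn a1 n ≤ yn a1 (n + 1) := (strictMono_y a1).monotone (Nat.le_succ n)
    zify at h h2
    linarith

theorem yn_upper {a : ℕ} (a1 : 1 < a) (n : ℕ) :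
    (yn a1 (n + 2) : ℤ) ≤ 2 * (a : ℤ) * yn a1 (n + 1) := by
  have h := yn_succ_succ a1 n
  zify at h
  have : (0 : ℤ) ≤ yn a1 n := by positivity
  linarith

theorem yn_lower_pow {a : ℕ} (a1 : 1 < a) (n : ℕ) :
    (2 * (a : ℤ) - 1) ^ n ≤ yn a1 (n + 1) := by
  induction n with
  | zero => simp
  | succ n ih =>
    have h := yn_lower a1 (n + 1)
    have ha : (1 : ℤ) < a := by exact_mod_cast a1
    calc (2 * (a : ℤ) - 1) ^ (n + 1) = (2 * (a : ℤ) - 1) * (2 * (a : ℤ) - 1) ^ n := by ring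
      _ ≤ (2 * (a : ℤ) - 1) * yn a1 (n + 1) := by gcongr; linarith
      _ ≤ _ := h

theorem yn_upper_pow {a : ℕ} (a1 : 1 < a) (n : ℕ) :
    (yn a1 (n + 1) : ℤ) ≤ (2 * (a : ℤ)) ^ n := by
  induction n with
  | zero => simp
  | succ n ih =>
    have h := yn_upper a1 n
    calc (yn a1 (n + 2) : ℤ) ≤ 2 * (a : ℤ) * yn a1 (n + 1) := h
      _ ≤ 2 * (a : ℤ) * (2 * (a : ℤ)) ^ n := by gcongr
      _ = _ := by ring

theorem yn_ge_two_mul {a : ℕ} (a1 : 1 < a) (n : ℕ) (hn : 2 ≤ n) : 2 * n ≤ yn a1 n := by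
  induction n, hn using Nat.le_induction with
  | base =>
    have h := yn_succ_succ a1 0
    simp at h ⊢
    nlinarith
  | succ n hn ih =>
    have h := yn_lower a1 n
    have ha : (1 : ℤ) < a := by exact_mod_cast a1
    zify at *
    nlinarith

theorem yn_mod_sub_one {a : ℕ} (a1 : 1 < a) (n : ℕ) : ((a : ℤ) - 1) ∣ (yn a1 n : ℤ) - n := by
  have h := (yn_modEq_a_sub_one a1 n).symm
  have h2 := (Nat.modEq_iff_dvd).1 h
  rwa [Nat.cast_sub (by omega), Nat.cast_one] at h2

/-- step-down lemma for the `y`-sequence -/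
theorem step_down {a : ℕ} (a1 : 1 < a) (n m j : ℕ) (hn : 0 < n) (hnm : 2 * n ≤ m)
    (h : (xn a1 m : ℤ) ∣ (yn a1 j : ℤ) ^ 2 - (yn a1 n : ℤ) ^ 2) :
    (2 * m : ℤ) ∣ (j : ℤ) - n ∨ (2 * m : ℤ) ∣ (j : ℤ) + n := by
  have key : ∀ i, (xn a1 (2 * i) : ℤ) = 2 * ((a : ℤ) ^ 2 - 1) * (yn a1 i : ℤ) ^ 2 + 1 := by
    intro i
    have h1 := xn_add a1 i i
    have h2 := pell_eq_int a1 i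
    have h3 := dz_val a1
    rw [← two_mul] at h1
    zify at h1
    rw [h3] at h1
    simp only [az] at h1
    rw [h1]; linarith
  have h4 : xn a1 (2 * j) ≡ xn a1 (2 * n) [MOD xn a1 m] := by
    apply Nat.ModEq.symm
    rw [Nat.modEq_iff_dvd, key, key]
    have : (2 * ((a : ℤ) ^ 2 - 1) * (yn a1 j : ℤ) ^ 2 + 1 - (2 * ((a : ℤ) ^ 2 - 1) * (yn a1 n : ℤ) ^ 2 + 1)) = (2 * ((a : ℤ) ^ 2 - 1)) * ((yn a1 j : ℤ) ^ 2 - (yn a1 n : ℤ) ^ 2) := by ring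
    rw [this]
    exact Dvd.dvd.mul_left h _
  rcases modEq_of_xn_modEq a1 (by omega) hnm h4 with h5 | h5
  · left
    have := (Nat.modEq_iff_dvd).1 h5.symm
    push_cast at this
    obtain ⟨c, hc⟩ := this
    exact ⟨c, by linarith⟩
  · right
    have := (Nat.modEq_zero_iff_dvd).1 h5
    zify at this
    obtain ⟨c, hc⟩ := this
    exact ⟨c, by linarith⟩

theorem squares_of_coprime {p q : ℤ} (hp : 0 ≤ p) (hq : 0 ≤ q) (h : IsCoprime p q)
    (hs : IsSquare (p * q)) : IsSquare p ∧ IsSquare q := by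
  obtain ⟨r, hr⟩ := hs
  have h1 := Int.sq_of_isCoprime h (c := r) (by rw [hr]; ring)
  have h2 := Int.sq_of_isCoprime h.symm (c := r) (by rw [mul_comm, hr]; ring)
  constructor
  · obtain ⟨s, hs | hs⟩ := h1
    · exact ⟨s, by rw [hs]; ring⟩
    · have : s = 0 := by nlinarith [sq_nonneg s]
      exact ⟨0, by rw [hs, this]; ring⟩
  · obtain ⟨s, hs | hs⟩ := h2
    · exact ⟨s, by rw [hs]; ring⟩
    · have : s = 0 := by nlinarith [sq_nonneg s]
      exact ⟨0, by rw [hs, this]; ring⟩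

/-- The expression `D * F * I`. -/
def pD {R : Type*} [CommRing R] (a C : R) : R := (a ^ 2 - 1) * C ^ 2 + 1
def pE {R : Type*} [CommRing R] (a C x : R) : R := C ^ 2 * pD a C * x
def pG {R : Type*} [CommRing R] (a F : R) : R := a + F * (F - a)
def pH {R : Type*} [CommRing R] (k C F y : R) : R := C + F * (k + y * C)
def pDFI {R : Type*} [CommRing R] (a k C x y : R) : R :=
  pD a C * pD a (pE a C x) * pD (pG a (pD a (pE a C x))) (pH k C (pD a (pE a C x)) y)

theorem dfi_coprime (a k C x y : ℤ) :
    IsCoprime (pD a C) (pD a (pE a C x)) ∧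
    IsCoprime (pD a C * pD a (pE a C x))
      (pD (pG a (pD a (pE a C x))) (pH k C (pD a (pE a C x)) y)) := by
  set D := pD a C with hD
  set E := pE a C x with hE
  set F := pD a E with hF
  have h1 : F = (a ^ 2 - 1) * E ^ 2 + 1 := rfl
  have h2 : E = C ^ 2 * D * x := rfl
  have c1 : IsCoprime D F := by
    refine ⟨-((a ^ 2 - 1) * E * C ^ 2 * x), 1, ?_⟩
    rw [h1]; linear_combination ((a ^ 2 - 1) * E) * h2
  refine ⟨c1, ?_⟩
  set t := (a ^ 2 - 1) * E * C ^ 2 * x with ht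
  have hF1 : F = 1 + D * t := by rw [h1, ht]; linear_combination ((a ^ 2 - 1) * E) * h2
  apply IsCoprime.mul_left
  · have : pD (pG a F) (pH k C F y) = 1 + D * ((t * (1 + F - a)) * (pG a F + 1) * (pH k C F y) ^ 2) := by
      have hg : pG a F - 1 = D * (t * (1 + F - a)) := by
        unfold pG; rw [hF1]; ring
      unfold pD
      linear_combination (pG a F + 1) * (pH k C F y) ^ 2 * hg
    rw [this]
    exact ⟨-((t * (1 + F - a)) * (pG a F + 1) * (pH k C F y) ^ 2), 1, by ring⟩
  · have : ∃ s, pD (pG a F) (pH k C F y) = D + s * F := by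
      refine ⟨(2 * a * (F - a) + F * (F - a) ^ 2) * (pH k C F y) ^ 2 +
        (a ^ 2 - 1) * (2 * C * (k + y * C) + F * (k + y * C) ^ 2), ?_⟩
      rw [hD]; unfold pD pG pH; ring
    obtain ⟨s, hs⟩ := this
    rw [hs]
    exact c1.symm.add_mul_right_right s

theorem pell_unique {a k : ℕ} (a1 : 1 < a) (hk : 2 ≤ k) (hak : 4 * k + 4 < a) (C x y : ℤ)
    (hx : x ≠ 0) (hC : ((a : ℤ) - 1) ∣ C - k) (hs : IsSquare (pDFI (a : ℤ) k C x y)) :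
    C = yn a1 k := by
  have haz : (1 : ℤ) < a := by exact_mod_cast a1
  have ha2 : (0 : ℤ) < (a : ℤ) ^ 2 - 1 := by nlinarith
  have hpos : ∀ c : ℤ, 0 < pD (a : ℤ) c := by
    intro c; unfold pD; nlinarith [sq_nonneg c, mul_nonneg ha2.le (sq_nonneg c)]
  have hakz : 4 * (k : ℤ) + 4 < a := by exact_mod_cast hak
  have hkz : (2 : ℤ) ≤ k := by exact_mod_cast hk
  have hC0 : C ≠ 0 := by
    rintro rfl
    have := Int.le_of_dvd (by linarith) ((dvd_neg).2 hC)
    linarith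
  obtain ⟨c1, c2⟩ := dfi_coprime a k C x y
  set D := pD (a : ℤ) C with hD
  set E := pE (a : ℤ) C x with hE
  set F := pD (a : ℤ) E with hF
  have hE' : E = C ^ 2 * D * x := rfl
  have hF' : F = ((a : ℤ) ^ 2 - 1) * E ^ 2 + 1 := rfl
  have hDpos : 0 < D := hpos C
  have hE0 : E ≠ 0 := by
    rw [hE']; positivity
  have hE2 : 1 ≤ E ^ 2 := by have : 0 < E ^ 2 := by positivity
                             linarith
  have hFa : (a : ℤ) < F := by
    rw [hF']; nlinarith
  have hG1 : 1 < pG (a : ℤ) F := by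
    unfold pG; nlinarith
  have hIpos : 0 ≤ pD (pG (a : ℤ) F) (pH (k : ℤ) C F y) := by
    unfold pD; nlinarith [sq_nonneg (pH (k : ℤ) C F y), mul_nonneg (show (0 : ℤ) ≤ (pG (a : ℤ) F) ^ 2 - 1 by nlinarith) (sq_nonneg (pH (k : ℤ) C F y))]
  have hs' : IsSquare (D * F * pD (pG (a : ℤ) F) (pH (k : ℤ) C F y)) := hs
  obtain ⟨s1, sI⟩ := squares_of_coprime (mul_nonneg hDpos.le (by linarith)) hIpos c2 hs'
  obtain ⟨sD, sF⟩ := squares_of_coprime hDpos.le (by linarith) c1 s1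
  obtain ⟨rD, hrD⟩ := sD
  obtain ⟨rF, hrF⟩ := sF
  obtain ⟨rI, hrI⟩ := sI
  obtain ⟨n, -, hn⟩ := pell_of_sq a1 rD C (by rw [pow_two, ← hrD]; rfl)
  obtain ⟨m, hm1, hm⟩ := pell_of_sq a1 rF E (by rw [pow_two, ← hrF, hF'])
  obtain ⟨Gn, hGn⟩ := Int.eq_ofNat_of_zero_le (show 0 ≤ pG (a : ℤ) F by linarith)
  have hGn1 : 1 < Gn := by rw [hGn] at hG1; exact_mod_cast hG1
  rw [hGn] at hrI
  obtain ⟨j, -, hj⟩ := pell_of_sq hGn1 rI (pH (k : ℤ) C F y) (by rw [pow_two, ← hrI]; rfl)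
  have hn' : (yn a1 n : ℤ) = |C| := by rw [← hn]; simp
  have hm' : (yn a1 m : ℤ) = |E| := by rw [← hm]; simp
  have hj' : (yn hGn1 j : ℤ) = |pH (k : ℤ) C F y| := by rw [← hj]; simp
  have hn1 := yn_mod_sub_one a1 n
  -- n ≥ 2
  have hn0 : 2 ≤ n := by
    by_contra hlt
    have : n = 0 ∨ n = 1 := by omega
    rcases this with rfl | rfl
    · simp at hn'; exact hC0 (abs_eq_zero.1 hn'.symm)
    · simp at hn'
      rcases (abs_eq (by norm_num : (0 : ℤ) ≤ 1)).1 hn'.symm with h | h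
      · rw [h] at hC
        have := Int.le_of_dvd (by linarith) ((dvd_neg).2 hC)
        linarith
      · rw [h] at hC
        have := Int.le_of_dvd (by linarith) ((dvd_neg).2 hC)
        linarith
  have h2n := yn_ge_two_mul a1 n hn0
  -- C ∣ m
  have hCm : yn a1 n ∣ m := by
    apply dvd_of_ysq_dvd a1
    zify
    rw [hn', hm', abs_mul_abs_self, dvd_abs, hE']
    exact ⟨D * x, by ring⟩
  have hm0 : 0 < m := by
    rcases Nat.eq_zero_or_pos m with rfl | h
    · simp at hm'; exact absurd hm'.symm (by simpa using hE0)
    · exact h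
  have hCm' := Nat.le_of_dvd hm0 hCm
  have hCmz : C ∣ (m : ℤ) := by
    rw [← abs_dvd, ← hn']; exact_mod_cast hCm
  have hrF' : F = (xn a1 m : ℤ) ^ 2 := by
    rw [hrF, ← hm1]; simp [pow_two]
  have hGa : Gn ≡ a [MOD xn a1 m] := by
    apply Nat.ModEq.symm
    rw [Nat.modEq_iff_dvd, ← hGn]
    unfold pG
    refine ⟨(xn a1 m) * (F - a), ?_⟩
    rw [hrF']; ring
  have hya : (xn a1 m : ℤ) ∣ (yn hGn1 j : ℤ) - yn a1 j :=
    (Nat.modEq_iff_dvd).1 ((xy_modEq_of_modEq hGn1 a1 hGa j).2).symm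
  have hHC : (xn a1 m : ℤ) ∣ pH (k : ℤ) C F y - C := by
    unfold pH; rw [hrF']; exact ⟨(xn a1 m : ℤ) * (k + y * C), by ring⟩
  have hsd : (xn a1 m : ℤ) ∣ (yn a1 j : ℤ) ^ 2 - (yn a1 n : ℤ) ^ 2 := by
    rw [hn', sq_abs]
    have e1 : (yn hGn1 j : ℤ) ^ 2 = (pH (k : ℤ) C F y) ^ 2 := by rw [hj', sq_abs]
    have : (yn a1 j : ℤ) ^ 2 - C ^ 2 = (pH (k : ℤ) C F y - C) * (pH (k : ℤ) C F y + C)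
        - ((yn hGn1 j : ℤ) - yn a1 j) * ((yn hGn1 j : ℤ) + yn a1 j) := by
      linear_combination e1
    rw [this]
    exact dvd_sub (Dvd.dvd.mul_right hHC _) (Dvd.dvd.mul_right hya _)
  have hjn := step_down a1 n m j (by omega) (by omega) hsd
  have hC2m : C ∣ 2 * (m : ℤ) := Dvd.dvd.mul_left hCmz 2
  have hjn' : C ∣ (j : ℤ) - n ∨ C ∣ (j : ℤ) + n :=
    hjn.imp (fun h => hC2m.trans h) (fun h => hC2m.trans h)
  -- H ≡ ± j mod C
  have hF1 : C ∣ F - 1 := by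
    rw [hF', hE']
    exact ⟨((a : ℤ) ^ 2 - 1) * C ^ 3 * (D * x) ^ 2, by ring⟩
  have hG1C : C ∣ (Gn : ℤ) - 1 := by
    rw [← hGn]; unfold pG
    obtain ⟨q, hq⟩ := hF1
    refine ⟨q * (F + 1 - a), ?_⟩
    linear_combination (F + 1 - a) * hq
  have hjC : C ∣ (yn hGn1 j : ℤ) - j := hG1C.trans (yn_mod_sub_one hGn1 j)
  have hHk : C ∣ pH (k : ℤ) C F y - k := by
    unfold pH
    obtain ⟨q, hq⟩ := hF1
    refine ⟨1 + q * (k + y * C) + y, ?_⟩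
    linear_combination (k + y * C) * hq
  have hkj : C ∣ (k : ℤ) - j ∨ C ∣ (k : ℤ) + j := by
    rcases abs_choice (pH (k : ℤ) C F y) with h | h
    · left
      rw [hj', h] at hjC
      obtain ⟨p, hp⟩ := hjC
      obtain ⟨q, hq⟩ := hHk
      exact ⟨p - q, by linear_combination hp - hq⟩
    · right
      rw [hj', h] at hjC
      obtain ⟨p, hp⟩ := hjC
      obtain ⟨q, hq⟩ := hHk
      exact ⟨-p - q, by linear_combination -hp - hq⟩
  have hkn : C ∣ (k : ℤ) - n ∨ C ∣ (k : ℤ) + n := by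
    rcases hkj with ⟨p, hp⟩ | ⟨p, hp⟩ <;> rcases hjn' with ⟨q, hq⟩ | ⟨q, hq⟩
    · left; exact ⟨p + q, by linear_combination hp + hq⟩
    · right; exact ⟨p + q, by linear_combination hp + hq⟩
    · right; exact ⟨p - q, by linear_combination hp - hq⟩
    · left; exact ⟨p - q, by linear_combination hp - hq⟩
  have h2nz : 2 * (n : ℤ) ≤ |C| := by rw [← hn']; exact_mod_cast h2n
  have hn0z : (2 : ℤ) ≤ n := by exact_mod_cast hn0
  -- |C| > 2 * k
  have hCk : 2 * (k : ℤ) < |C| := by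
    by_contra hle
    push Not at hle
    have hCeq : C = k := by
      have h1 := Int.eq_zero_of_abs_lt_dvd hC (by
        rw [abs_lt]; constructor <;> cases abs_cases C <;> linarith)
      linarith
    have hCabs : |C| = k := by rw [hCeq]; simp
    have h3 : (n : ℤ) = k := by
      rw [hn', hCabs] at hn1
      have h1 := Int.eq_zero_of_abs_lt_dvd hn1 (by
        rw [abs_lt]; constructor <;> linarith)
      linarith
    linarith
  have hkeqn : (k : ℤ) = n := by
    rcases hkn with h | h
    · have h1 := Int.eq_zero_of_abs_lt_dvd ((abs_dvd _ _).2 h) (by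
        rw [abs_lt]; constructor <;> linarith)
      linarith
    · have h1 := Int.eq_zero_of_abs_lt_dvd ((abs_dvd _ _).2 h) (by
        rw [abs_lt]; constructor <;> linarith)
      linarith
  have hkn' : k = n := by exact_mod_cast hkeqn
  subst hkn'
  rcases abs_choice C with h | h
  · rw [hn', h]
  · exfalso
    rw [hn', h] at hn1
    have h3 := dvd_add hC hn1
    have h4 : C - (k : ℤ) + (-C - k) = -(2 * k) := by ring
    rw [h4, dvd_neg] at h3
    have := Int.le_of_dvd (by linarith) h3
    linarith

theorem not_sq_aux (a Q : ℤ) (ha : 1 < a) (hQ : 0 < Q) : ¬ IsSquare ((a ^ 2 - 1) * Q ^ 2) := by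
  rintro ⟨r, hr⟩
  have h1 : Q ^ 2 ∣ r ^ 2 := ⟨a ^ 2 - 1, by rw [pow_two r, ← hr]; ring⟩
  rw [Int.pow_dvd_pow_iff (by norm_num)] at h1
  obtain ⟨s, rfl⟩ := h1
  have h2 : a ^ 2 - 1 = s ^ 2 := by
    have : Q ^ 2 * (a ^ 2 - 1) = Q ^ 2 * s ^ 2 := by linarith
    exact mul_left_cancel₀ (by positivity) this
  have h3 : |s| < a := abs_lt_of_sq_lt_sq (by linarith) (by linarith)
  have h4 : a - 1 < |s| := by
    rw [← abs_of_nonneg (show 0 ≤ a - 1 by linarith)]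
    exact sq_lt_sq.1 (by nlinarith)
  linarith

theorem pell_exist {a k : ℕ} (a1 : 1 < a) (hk : 1 ≤ k) :
    ∃ x y : ℤ, x ≠ 0 ∧ IsSquare (pDFI (a : ℤ) k (yn a1 k) x y) := by
  have haz : (1 : ℤ) < a := by exact_mod_cast a1
  have ha2 : (0 : ℤ) < (a : ℤ) ^ 2 - 1 := by nlinarith
  obtain ⟨C, hCdef⟩ : ∃ C : ℤ, C = yn a1 k := ⟨_, rfl⟩
  rw [← hCdef]
  have hCpos : 0 < C := by
    have := yn_ge_n a1 k
    have : 0 < yn a1 k := by omega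
    rw [hCdef]; exact_mod_cast this
  obtain ⟨D, hD⟩ : ∃ D : ℤ, D = pD (a : ℤ) C := ⟨_, rfl⟩
  have hDpos : 0 < D := by rw [hD]; unfold pD; positivity
  have hDsq : D = (xn a1 k : ℤ) ^ 2 := by rw [pell_eq_int, hD, hCdef]; rfl
  have hns := not_sq_aux a (C ^ 2 * D) haz (by positivity)
  obtain ⟨s, x, hx, hx0⟩ := Pell.exists_of_not_isSquare (by positivity) hns
  obtain ⟨E, hE⟩ : ∃ E : ℤ, E = pE (a : ℤ) C x := ⟨_, rfl⟩
  have hE' : E = C ^ 2 * D * x := by rw [hE, hD]; rfl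
  obtain ⟨F, hF⟩ : ∃ F : ℤ, F = pD (a : ℤ) E := ⟨_, rfl⟩
  have hF' : F = ((a : ℤ) ^ 2 - 1) * E ^ 2 + 1 := by rw [hF]; rfl
  have hFs : F = s ^ 2 := by
    rw [hF', hE']; linear_combination -hx
  have hE0 : E ≠ 0 := by
    rw [hE']; positivity
  have hE2 : 1 ≤ E ^ 2 := by have : 0 < E ^ 2 := by positivity
                             linarith
  have hFa : (a : ℤ) < F := by
    rw [hF']; nlinarith
  have hG1 : 1 < pG (a : ℤ) F := by
    unfold pG; nlinarith
  obtain ⟨Gn, hGn⟩ := Int.eq_ofNat_of_zero_le (show 0 ≤ pG (a : ℤ) F by linarith)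
  have hGn1 : 1 < Gn := by rw [hGn] at hG1; exact_mod_cast hG1
  have hF1 : C ∣ F - 1 := by
    rw [hF', hE']
    exact ⟨((a : ℤ) ^ 2 - 1) * C ^ 3 * (D * x) ^ 2, by ring⟩
  have hG1C : C ∣ (Gn : ℤ) - 1 := by
    rw [← hGn]; unfold pG
    obtain ⟨q, hq⟩ := hF1
    refine ⟨q * (F + 1 - a), ?_⟩
    linear_combination (F + 1 - a) * hq
  have hkC : C ∣ (yn hGn1 k : ℤ) - k := hG1C.trans (yn_mod_sub_one hGn1 k)
  obtain ⟨Fn, hFn⟩ := Int.eq_ofNat_of_zero_le (show 0 ≤ F by linarith)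
  have hGa : Gn ≡ a [MOD Fn] := by
    apply Nat.ModEq.symm
    rw [Nat.modEq_iff_dvd, ← hGn]
    unfold pG
    refine ⟨(F - a), ?_⟩
    rw [hFn]; ring
  have hya : F ∣ (yn hGn1 k : ℤ) - C := by
    rw [hFn, hCdef]
    exact (Nat.modEq_iff_dvd).1 ((xy_modEq_of_modEq hGn1 a1 hGa k).2).symm
  obtain ⟨q, hq⟩ := hya
  have hqk : C ∣ q - k := by
    obtain ⟨r, hr⟩ := hF1
    obtain ⟨r', hr'⟩ := hkC
    refine ⟨r' - 1 - r * q, ?_⟩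
    linear_combination hr' - hq - q * hr
  obtain ⟨y, hy⟩ := hqk
  refine ⟨x, y, hx0, ?_⟩
  have hH : pH (k : ℤ) C F y = yn hGn1 k := by
    unfold pH; linear_combination -hq - F * hy
  unfold pDFI
  rw [← hE, ← hF, ← hD, hH, hGn, hDsq, hFs]
  have : pD (Gn : ℤ) (yn hGn1 k : ℤ) = (xn hGn1 k : ℤ) ^ 2 := by rw [pell_eq_int]; rfl
  rw [this]
  exact ⟨xn a1 k * s * xn hGn1 k, by ring⟩

end UP


namespace UP
open Pell

/-- integer part of `(V+1)^(2 * X) / V^X` -/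
def cN (X V : ℕ) : ℕ := ∑ i ∈ Finset.range (X + 1), Nat.choose (2 * X) (X + i) * V ^ i

def cr (X V : ℕ) : ℕ := ∑ i ∈ Finset.range X, Nat.choose (2 * X) i * V ^ i

theorem cN_eq (X V : ℕ) : (V + 1) ^ (2 * X) = V ^ X * cN X V + cr X V := by
  rw [add_pow]
  have : 2 * X + 1 = X + (X + 1) := by ring
  rw [this, Finset.sum_range_add, cN, cr, Finset.mul_sum, add_comm]
  congr 1
  · apply Finset.sum_congr rfl
    intro i _
    simp [pow_add]; ring
  · apply Finset.sum_congr rfl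
    intro i _
    simp; ring

theorem cr_le (X V : ℕ) (hV : 1 ≤ V) : cr X V * V ≤ 4 ^ X * V ^ X := by
  have h4 : 4 ^ X = ∑ i ∈ Finset.range (2 * X + 1), Nat.choose (2 * X) i := by
    rw [Nat.sum_range_choose, pow_mul]; norm_num
  rw [cr, h4, Finset.sum_mul, Finset.sum_mul]
  calc ∑ i ∈ Finset.range X, Nat.choose (2 * X) i * V ^ i * V
      ≤ ∑ i ∈ Finset.range X, Nat.choose (2 * X) i * V ^ X := by
        apply Finset.sum_le_sum
        intro i hi
        rw [mul_assoc, ← pow_succ]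
        have := Finset.mem_range.1 hi
        exact Nat.mul_le_mul_left _ (Nat.pow_le_pow_right hV (by omega))
    _ ≤ _ := by
        apply Finset.sum_le_sum_of_subset
        intro i hi
        simp at hi ⊢; omega

theorem cN_dvd (X V Y : ℕ) (hY : Y ∣ V) : Y ∣ cN X V ↔ Y ∣ Nat.centralBinom X := by
  rw [cN, Finset.sum_range_succ']
  simp only [add_zero, pow_zero, mul_one]
  rw [Nat.centralBinom]
  refine Nat.dvd_add_right ?_
  apply Finset.dvd_sum
  intro i _
  exact Dvd.dvd.mul_left (Dvd.dvd.trans hY (dvd_pow_self V (by omega))) _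

theorem cN_pos (X V : ℕ) : 1 ≤ cN X V := by
  rw [cN, Finset.sum_range_succ']
  have : 0 < Nat.choose (2 * X) (X + 0) := Nat.choose_pos (by omega)
  simp only [pow_zero, mul_one]
  omega

theorem approx (X V u a a' : ℕ) (C J : ℝ) (hV : 1 ≤ V) (hu : 1 ≤ u)
    (ha : a = u * (V + 1)) (ha' : a' = 2 * u ^ 2 * V) (haX : X ≤ a)
    (hC1 : (2 * (a : ℝ) - 1) ^ (2 * X) ≤ C) (hC2 : C ≤ (2 * (a : ℝ)) ^ (2 * X))
    (hJ1 : (2 * (a' : ℝ) - 1) ^ X ≤ J) (hJ2 : J ≤ (2 * (a' : ℝ)) ^ X) :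
    |C - J * ((V + 1 : ℝ) ^ (2 * X) / V ^ X)| ≤ J * ((V + 1 : ℝ) ^ (2 * X) / V ^ X) * (X / a) := by
  have hVr : (1 : ℝ) ≤ V := by exact_mod_cast hV
  have hur : (1 : ℝ) ≤ u := by exact_mod_cast hu
  have har : (a : ℝ) = u * (V + 1) := by rw [ha]; push_cast; ring
  have har' : (a' : ℝ) = 2 * u ^ 2 * V := by rw [ha']; push_cast; ring
  have hXr : (X : ℝ) ≤ a := by exact_mod_cast haX
  have hX0 : (0 : ℝ) ≤ X := by positivity
  have haa : (a : ℝ) ≤ a' := by rw [har, har']; nlinarith [mul_le_mul hur hVr (by norm_num) (by linarith), mul_nonneg (show (0 : ℝ) ≤ u - 1 by linarith) (show (0 : ℝ) ≤ V - 1 by linarith), mul_nonneg (mul_nonneg (show (0 : ℝ) ≤ u - 1 by linarith) (show (0 : ℝ) ≤ u by linarith)) (show (0 : ℝ) ≤ V by linarith)]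
  have ha1 : (1 : ℝ) ≤ a := by rw [har]; nlinarith
  have hZ : ((2 * (a : ℝ)) ^ (2 * X)) = (2 * (a' : ℝ)) ^ X * ((V + 1 : ℝ) ^ (2 * X) / V ^ X) := by
    have : (2 * (a : ℝ)) ^ (2 * X) * V ^ X = (2 * (a' : ℝ)) ^ X * (V + 1 : ℝ) ^ (2 * X) := by
      rw [pow_mul, pow_mul, ← mul_pow, ← mul_pow, har, har']
      congr 1; ring
    field_simp
    exact this
  set Z := (V + 1 : ℝ) ^ (2 * X) / V ^ X with hZdef
  have hZ0 : 0 < Z := by positivity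
  have ha0 : (0 : ℝ) < a := by linarith
  have ha0' : (0 : ℝ) < a' := by linarith
  have hP' : (0 : ℝ) < (2 * (a' : ℝ)) ^ X := by positivity
  have b1 : (1 - X / a) * (2 * (a : ℝ)) ^ (2 * X) ≤ (2 * (a : ℝ) - 1) ^ (2 * X) := by
    have h := one_add_mul_le_pow (a := -(1 / (2 * (a : ℝ)))) (by
      have : 1 / (2 * (a : ℝ)) ≤ 1 := by rw [div_le_one (by positivity)]; linarith
      linarith) (2 * X)
    have e : (2 * (a : ℝ) - 1) = (1 + -(1 / (2 * (a : ℝ)))) * (2 * (a : ℝ)) := by field_simp; ring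
    rw [e, mul_pow (1 + -(1 / (2 * (a : ℝ)))) (2 * (a : ℝ))]
    apply mul_le_mul_of_nonneg_right _ (by positivity)
    refine le_trans (le_of_eq ?_) h
    push_cast; field_simp; ring
  have b2 : (1 - X / (2 * a')) * (2 * (a' : ℝ)) ^ X ≤ (2 * (a' : ℝ) - 1) ^ X := by
    have h := one_add_mul_le_pow (a := -(1 / (2 * (a' : ℝ)))) (by
      have : 1 / (2 * (a' : ℝ)) ≤ 1 := by rw [div_le_one (by linarith)]; linarith
      linarith) X
    have : (0 : ℝ) < a' := by linarith
    have e : (2 * (a' : ℝ) - 1) = (1 + -(1 / (2 * (a' : ℝ)))) * (2 * (a' : ℝ)) := by field_simp; ring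
    rw [e, mul_pow (1 + -(1 / (2 * (a' : ℝ)))) (2 * (a' : ℝ))]
    apply mul_le_mul_of_nonneg_right _ (by positivity)
    refine le_trans (le_of_eq ?_) h
    field_simp; ring
  have hXa : X / (a : ℝ) ≤ 1 := by rw [div_le_one ha0]; exact hXr
  rw [abs_le]
  constructor
  · have : J * Z * (1 - X / a) ≤ (2 * (a' : ℝ)) ^ X * Z * (1 - X / a) := by
      gcongr
    rw [← hZ] at this
    linarith
  · -- C ≤ J Z (1 + X/a)
    have h1 : (1 : ℝ) ≤ (1 + (X : ℝ) / a) * (1 - X / (2 * a')) := by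
      have : (1 + (X : ℝ) / a) * (1 - X / (2 * a')) - 1 = X * (2 * a' - a - X) / (2 * a * a') := by
        field_simp; ring
      have h2 : 0 ≤ X * (2 * a' - a - X) / (2 * a * (a' : ℝ)) := by
        apply div_nonneg _ (by positivity)
        apply mul_nonneg hX0; linarith
      linarith
    have h3 : (2 * (a' : ℝ)) ^ X * Z ≤ (1 + X / a) * J * Z := by
      apply mul_le_mul_of_nonneg_right _ hZ0.le
      calc (2 * (a' : ℝ)) ^ X ≤ ((1 + X / a) * (1 - X / (2 * a'))) * (2 * (a' : ℝ)) ^ X :=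
            le_mul_of_one_le_left hP'.le h1
        _ = (1 + X / a) * ((1 - X / (2 * a')) * (2 * (a' : ℝ)) ^ X) := by ring
        _ ≤ (1 + X / a) * J := by
            apply mul_le_mul_of_nonneg_left (b2.trans hJ1) (by positivity)
    rw [← hZ] at h3
    linarith

/-- congruence for powers of two -/
theorem pow_congr {a : ℕ} (a1 : 1 < a) (n : ℕ) :
    (4 * (a : ℤ) - 5) ∣ (2 ^ n) ^ 2 - 1 + 2 * 2 ^ n * yn a1 n * (a - 2) := by
  have h := x_sub_y_dvd_pow a1 2 n
  have h2 := pell_eq_int a1 n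
  simp only [xz, yz] at h
  push_cast at h
  obtain ⟨q, hq⟩ := h
  set C : ℤ := (yn a1 n : ℤ)
  set x : ℤ := (xn a1 n : ℤ)
  set P : ℤ := 2 ^ n
  refine ⟨C ^ 2 + q * (x + (C * (a - 2) + P)), ?_⟩
  linear_combination (x + (C * (a - 2) + P)) * hq + h2

theorem pow_two_of_congr {a : ℕ} (a1 : 1 < a) (n : ℕ) (W : ℤ) (hW : 0 ≤ W)
    (h : (4 * (a : ℤ) - 5) ∣ W ^ 2 - 1 + 2 * W * yn a1 n * (a - 2))
    (hsz : (W + 2 ^ n) * (2 ^ n * W + 1) < 4 * (a : ℤ) - 5) : W = 2 ^ n := by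
  have h' := pow_congr a1 n
  set P : ℤ := 2 ^ n with hP
  have hPp : 0 < P := by positivity
  have hd : (4 * (a : ℤ) - 5) ∣ (W - P) * (P * W + 1) := by
    obtain ⟨q, hq⟩ := h
    obtain ⟨q', hq'⟩ := h'
    exact ⟨P * q - W * q', by linear_combination P * hq - W * hq'⟩
  have hPW : 0 < P * W + 1 := by positivity
  have h0 := Int.eq_zero_of_abs_lt_dvd hd (by
    rw [abs_mul, abs_of_pos hPW]
    refine lt_of_le_of_lt ?_ hsz
    apply mul_le_mul_of_nonneg_right _ hPW.le
    rw [abs_le]; constructor <;> linarith)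
  rcases mul_eq_zero.1 h0 with h | h
  · linarith
  · exact absurd h hPW.ne'

set_option maxHeartbeats 8000000 in
theorem bridge_back_core (X Y b μ V u a a' : ℕ) (hX : 1 ≤ X) (hY : 1 ≤ Y) (hb : 1 ≤ b) (hbμ : b ≤ μ)
    (l w x y C J : ℤ) (hl : l ≠ 0) (hx : x ≠ 0)
    (hV : (V : ℤ) = 64 * Y * μ ^ 2 * (w ^ 2 + 1)) (hu : (u : ℤ) = 16 * l ^ 2 * X ^ 2 * Y ^ 2)
    (ha : a = u * (V + 1)) (ha' : a' = 2 * u ^ 2 * V)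
    (hC : ((a : ℤ) - 1) ∣ C - ((2 * X + 1 : ℕ) : ℤ)) (hJ : ((a' : ℤ) - 1) ∣ J - ((X + 1 : ℕ) : ℤ))
    (s1 : IsSquare (pDFI (a : ℤ) ((2 * X + 1 : ℕ) : ℤ) C x y))
    (s2 : IsSquare (pD (a' : ℤ) J))
    (hdvd : 4 * (a : ℤ) - 5 ∣ (2 * b * w ^ 2) ^ 2 - 1 + 2 * (2 * b * w ^ 2) * C * (a - 2))
    (hR : 16 * (C - l * Y * J) ^ 2 < J ^ 2) :
    (∃ i, b = 2 ^ i) ∧ Y ∣ Nat.centralBinom X := by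
  have hXz : (1 : ℤ) ≤ X := by exact_mod_cast hX
  have hYz : (1 : ℤ) ≤ Y := by exact_mod_cast hY
  have hbz : (1 : ℤ) ≤ b := by exact_mod_cast hb
  have hbμz : (b : ℤ) ≤ μ := by exact_mod_cast hbμ
  have hl2 : 1 ≤ l ^ 2 := by have : 0 < l ^ 2 := by positivity
                             linarith
  have hμ2 : (1 : ℤ) ≤ μ ^ 2 := by nlinarith
  have hV64 : (64 : ℤ) ≤ V := by
    rw [hV]
    have h1 : (1 : ℤ) ≤ Y * μ ^ 2 := by nlinarith
    have h2 : (1 : ℤ) ≤ Y * μ ^ 2 * (w ^ 2 + 1) := by nlinarith [sq_nonneg w]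
    linarith
  have hX2 : (X : ℤ) ≤ X ^ 2 := by nlinarith
  have hY2 : (1 : ℤ) ≤ Y ^ 2 := by nlinarith
  have hu16 : 16 * (X : ℤ) ≤ u := by
    rw [hu]
    have h1 : (X : ℤ) ≤ l ^ 2 * X ^ 2 := hX2.trans (le_mul_of_one_le_left (by positivity) hl2)
    have h2 : (X : ℤ) ≤ l ^ 2 * X ^ 2 * Y ^ 2 := h1.trans (le_mul_of_one_le_right (by positivity) hY2)
    linarith
  have haz : (a : ℤ) = u * (V + 1) := by rw [ha]; push_cast; ring
  have haz' : (a' : ℤ) = 2 * u ^ 2 * V := by rw [ha']; push_cast; ring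
  have huV : (u : ℤ) * V < a := by rw [haz]; linarith
  have haX : 1024 * (X : ℤ) ≤ u * V := by nlinarith
  have haa : (a : ℤ) < a' := by rw [haz, haz']; nlinarith [mul_le_mul hu16 hV64 (by norm_num) (by positivity)]
  have a1 : 1 < a := by zify; linarith
  have a1' : 1 < a' := by zify; linarith
  have hCeq : C = yn a1 (2 * X + 1) := by
    refine pell_unique a1 (by omega) (by zify; linarith) C x y hx hC s1
  have hClow : (2 * (a : ℤ) - 1) ^ (2 * X) ≤ C := by rw [hCeq]; exact yn_lower_pow a1 (2 * X)
  have hCup : C ≤ (2 * (a : ℤ)) ^ (2 * X) := by rw [hCeq]; exact yn_upper_pow a1 (2 * X)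
  have hCpos : 0 < C := lt_of_lt_of_le (by have : 0 < 2 * (a : ℤ) - 1 := by linarith
                                           positivity) hClow
  have hR' : 4 * |C - l * Y * J| < |J| := by
    have : (4 * (C - l * Y * J)) ^ 2 < J ^ 2 := by linarith
    have := sq_lt_sq.1 this
    rwa [abs_mul, abs_of_pos (by norm_num : (0 : ℤ) < 4)] at this
  have hJ2C : |J| < 2 * C := by
    have h1 : |J| ≤ |l * Y * J| := by
      rw [abs_mul]
      apply le_mul_of_one_le_left (abs_nonneg _)
      rw [abs_mul]
      have : 1 ≤ |l| := Int.one_le_abs hl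
      have h2 : (1 : ℤ) ≤ |(Y : ℤ)| := by rw [abs_of_pos (by linarith)]; exact hYz
      exact one_le_mul_of_one_le_of_one_le this h2
    have h2 : |l * Y * J| ≤ |C| + |C - l * Y * J| := by
      have := abs_sub_abs_le_abs_sub (l * Y * J) C
      rw [abs_sub_comm] at this
      linarith
    rw [abs_of_pos hCpos] at h2
    linarith
  have hJeq : J = yn a1' (X + 1) := by
    obtain ⟨r, hr⟩ := s2
    obtain ⟨m, -, hm⟩ := pell_of_sq a1' r J (by rw [pow_two, ← hr]; rfl)
    have hm' : (yn a1' m : ℤ) = |J| := by rw [← hm]; simp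
    have hm1 := yn_mod_sub_one a1' m
    have hmlt : (m : ℤ) ≤ 2 * X + 1 := by
      by_contra hlt
      push Not at hlt
      have hlt' : 2 * X + 1 ≤ m - 1 := by zify at hlt ⊢; omega
      have h3 := yn_lower_pow a1' (m - 1)
      rw [show m - 1 + 1 = m by omega, hm'] at h3
      have h4 : (2 * (a : ℤ)) ^ (2 * X + 1) ≤ (2 * (a' : ℤ) - 1) ^ (m - 1) := by
        calc (2 * (a : ℤ)) ^ (2 * X + 1) ≤ (2 * (a' : ℤ) - 1) ^ (2 * X + 1) := by
              gcongr; linarith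
          _ ≤ _ := pow_le_pow_right₀ (by linarith) hlt'
      have h5 : 2 * C ≤ (2 * (a : ℤ)) ^ (2 * X + 1) := by
        rw [pow_succ]
        have : C * 2 ≤ (2 * (a : ℤ)) ^ (2 * X) * (2 * a) := mul_le_mul hCup (by linarith) (by norm_num) (by positivity)
        linarith
      linarith
    push_cast at hJ
    rcases abs_choice J with h | h
    · rw [hm', h] at hm1
      have h3 : (a' : ℤ) - 1 ∣ (m : ℤ) - (X + 1) := by
        obtain ⟨p, hp⟩ := hJ
        obtain ⟨q, hq⟩ := hm1
        exact ⟨p - q, by linear_combination hp - hq⟩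
      have h4 := Int.eq_zero_of_abs_lt_dvd h3 (by rw [abs_lt]; constructor <;> linarith)
      have h5 : m = X + 1 := by zify; linarith
      rw [← h, ← hm', h5]
    · exfalso
      rw [hm', h] at hm1
      have h3 : (a' : ℤ) - 1 ∣ (m : ℤ) + (X + 1) := by
        obtain ⟨p, hp⟩ := hJ
        obtain ⟨q, hq⟩ := hm1
        exact ⟨- p - q, by linear_combination - hp - hq⟩
      have h4 := Int.eq_zero_of_abs_lt_dvd h3 (by rw [abs_lt]; constructor <;> linarith)
      linarith
  have hJlow : (2 * (a' : ℤ) - 1) ^ X ≤ J := by rw [hJeq]; exact yn_lower_pow a1' X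
  have hJup : J ≤ (2 * (a' : ℤ)) ^ X := by rw [hJeq]; exact yn_upper_pow a1' X
  have hJpos : 0 < J := lt_of_lt_of_le (by have : 0 < 2 * (a' : ℤ) - 1 := by linarith
                                           positivity) hJlow
  rw [abs_of_pos hJpos] at hR'
  have hlpos : 0 < l := by
    by_contra hle
    have hle' : l ≤ -1 := by omega
    have h1 : l * Y ≤ -1 := by
      have : l * Y ≤ -1 * Y := mul_le_mul_of_nonneg_right hle' (by linarith)
      linarith
    have h2 : l * Y * J ≤ -1 * J := mul_le_mul_of_nonneg_right h1 hJpos.le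
    have := le_abs_self (C - l * Y * J)
    linarith
  have hlY : 1 ≤ l * Y := one_le_mul_of_one_le_of_one_le hlpos hYz
  -- V^X ≤ 2 l Y
  have hVX : (V : ℤ) ^ X ≤ 2 * (l * Y) := by
    have h1 : (2 * (u : ℤ) * V) ^ (2 * X) ≤ C := by
      refine le_trans ?_ hClow
      gcongr
      rw [haz]; linarith
    have h2 : (2 * (u : ℤ) * V) ^ (2 * X) = (2 * (a' : ℤ)) ^ X * V ^ X := by
      rw [pow_mul, ← mul_pow, haz']; congr 1; ring
    have h3 : J * V ^ X ≤ C := by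
      refine le_trans ?_ (h2 ▸ h1)
      gcongr
    have h4 := le_abs_self (C - l * Y * J)
    have h5 : C ≤ 2 * (l * Y) * J := by
      have : 1 * J ≤ l * Y * J := mul_le_mul_of_nonneg_right hlY hJpos.le
      linarith
    have h6 : V ^ X * J ≤ 2 * (l * Y) * J := by linarith
    exact le_of_mul_le_mul_right h6 hJpos
  -- W = 2^(2 * X + 1)
  have hw0 : 0 ≤ w ^ 2 := sq_nonneg w
  have hbw : 64 * (b * w ^ 2) ≤ (V : ℤ) := by
    rw [hV]
    have h1 : (b : ℤ) ≤ μ ^ 2 := hbμz.trans (le_self_pow₀ (by linarith) (by norm_num))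
    have h2 : (b : ℤ) ≤ Y * μ ^ 2 := h1.trans (le_mul_of_one_le_left (by positivity) hYz)
    have h3 : (b : ℤ) * w ^ 2 ≤ Y * μ ^ 2 * w ^ 2 := mul_le_mul_of_nonneg_right h2 hw0
    have h4 : 0 ≤ (Y : ℤ) * μ ^ 2 := by positivity
    linarith
  have hbw0 : 0 ≤ (b : ℤ) * w ^ 2 := by positivity
  have hW : 2 * (b : ℤ) * w ^ 2 = 2 ^ (2 * X + 1) := by
    rw [hCeq] at hdvd
    refine pow_two_of_congr a1 (2 * X + 1) _ (by positivity) hdvd ?_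
    set P : ℤ := 2 ^ (2 * X + 1) with hP
    have hP2 : 2 ≤ P := by
      rw [hP, pow_succ]
      have : (1 : ℤ) ≤ 2 ^ (2 * X) := one_le_pow₀ (by norm_num)
      linarith
    have hPV : P ^ 2 ≤ 4 * V ^ X := by
      have : P ^ 2 = 4 * 16 ^ X := by
        rw [hP, ← pow_mul, show (2 * X + 1) * 2 = 4 * X + 2 by ring, pow_add, pow_mul]; norm_num; ring
      rw [this]
      have : (16 : ℤ) ^ X ≤ V ^ X := by gcongr; linarith
      linarith
    have hW1 : 2 * (b : ℤ) * w ^ 2 ≤ V := by linarith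
    have e1 : (2 * (b : ℤ) * w ^ 2 + P) * (P * (2 * (b : ℤ) * w ^ 2) + 1) ≤ (V + P) * (P * V + 1) := by
      have : 0 ≤ 2 * (b : ℤ) * w ^ 2 := by positivity
      gcongr
    have e2 : (V + P) * (P * V + 1) ≤ (P * V) * (2 * (P * V)) := by
      have hV2 : (2 : ℤ) ≤ V := by linarith
      have hPVV : 0 ≤ (P - 2) * ((V : ℤ) - 2) := mul_nonneg (by linarith) (by linarith)
      apply mul_le_mul
      · have := mul_nonneg (show 0 ≤ P - 1 by linarith) (show 0 ≤ (V : ℤ) - 1 by linarith)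
        linarith
      · linarith
      · positivity
      · positivity
    have hVXV : (V : ℤ) ≤ V ^ X := le_self_pow₀ (by linarith) (by omega)
    have hu4 : 4 * ((V : ℤ) ^ X * V ^ X) ≤ u := by
      have h1 : (V : ℤ) ^ X * V ^ X ≤ (2 * (l * Y)) * (2 * (l * Y)) := by
        apply mul_le_mul hVX hVX (by positivity) (by linarith)
      have h2 : (l * Y) ^ 2 * 1 ≤ (l * Y) ^ 2 * X ^ 2 := by
        apply mul_le_mul_of_nonneg_left _ (sq_nonneg _); linarith
      rw [hu]; linarith
    have e3 : (P * V) * (2 * (P * V)) ≤ 2 * u * V := by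
      have h1 : P ^ 2 * (V * V) ≤ (4 * V ^ X) * (V ^ X * V) := by
        apply mul_le_mul hPV _ (by positivity) (by positivity)
        apply mul_le_mul_of_nonneg_right hVXV (by positivity)
      have h2 : 4 * ((V : ℤ) ^ X * V ^ X) * V ≤ u * V := mul_le_mul_of_nonneg_right hu4 (by positivity)
      linarith
    linarith
  have hbpow : ∃ i, b = 2 ^ i := by
    have : b ∣ 2 ^ (2 * X + 1) := by
      have h : (b : ℤ) ∣ 2 ^ (2 * X + 1) := ⟨2 * w ^ 2, by rw [← hW]; ring⟩
      exact_mod_cast h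
    obtain ⟨i, -, hi⟩ := (Nat.dvd_prime_pow Nat.prime_two).1 this
    exact ⟨i, hi⟩
  refine ⟨hbpow, ?_⟩
  have hYV : Y ∣ V := by
    have : (Y : ℤ) ∣ V := ⟨64 * μ ^ 2 * (w ^ 2 + 1), by rw [hV]; ring⟩
    exact_mod_cast this
  rw [← cN_dvd X V Y hYV]
  have h4V : 64 * (4 : ℤ) ^ X ≤ V := by
    have : (4 : ℤ) ^ X = b * w ^ 2 := by
      have : (2 : ℤ) * 4 ^ X = 2 * (b * w ^ 2) := by
        rw [← mul_assoc, hW, pow_succ, pow_mul]; norm_num; ring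
      linarith
    rw [this]; exact hbw
  have happ := approx X V u a a' C J (by zify; linarith) (by zify; linarith) ha ha'
    (by zify; linarith) (by exact_mod_cast hClow) (by exact_mod_cast hCup) (by exact_mod_cast hJlow)
    (by exact_mod_cast hJup)
  have hr := cr_le X V (by zify; linarith)
  have hNr := cN_eq X V
  have hVr : (64 : ℝ) ≤ V := by exact_mod_cast hV64
  have hZeq : ((V : ℝ) + 1) ^ (2 * X) / V ^ X = cN X V + cr X V / V ^ X := by
    have : ((V : ℝ) + 1) ^ (2 * X) = V ^ X * cN X V + cr X V := by exact_mod_cast hNr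
    rw [this]; field_simp
  have hr0 : (0 : ℝ) ≤ cr X V / (V : ℝ) ^ X := by positivity
  have hr1 : (cr X V : ℝ) / (V : ℝ) ^ X ≤ 1 / 64 := by
    rw [div_le_iff₀ (by positivity)]
    have h1 : (cr X V : ℝ) * V ≤ 4 ^ X * V ^ X := by exact_mod_cast hr
    have h2 : 64 * (4 : ℝ) ^ X ≤ V := by exact_mod_cast h4V
    have h3 : (64 * (4 : ℝ) ^ X) * V ^ X ≤ V * V ^ X := mul_le_mul_of_nonneg_right h2 (by positivity)
    have h4 : (64 * cr X V : ℝ) * V ≤ V ^ X * V := by linarith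
    have := le_of_mul_le_mul_right h4 (by linarith)
    linarith
  set Z := ((V : ℝ) + 1) ^ (2 * X) / V ^ X with hZdef
  have hJr : (0 : ℝ) < J := by exact_mod_cast hJpos
  have hRr : 4 * |(C : ℝ) - l * Y * J| < J := by exact_mod_cast hR'
  have hlYr : (1 : ℝ) ≤ l * Y := by exact_mod_cast hlY
  have hXr : (1 : ℝ) ≤ X := by exact_mod_cast hX
  have hZ0 : 0 ≤ Z := by positivity
  have har0 : (0 : ℝ) < a := by positivity
  have hulY : 16 * (l * Y * X : ℝ) ≤ u := by
    have hur : (u : ℝ) = 16 * l ^ 2 * X ^ 2 * Y ^ 2 := by exact_mod_cast hu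
    have : (1 : ℝ) ≤ l * Y * X := one_le_mul_of_one_le_of_one_le hlYr hXr
    have h2 : (l * Y * X : ℝ) ≤ l * Y * X * (l * Y * X) := le_mul_of_one_le_left (by linarith) this
    rw [hur]; linarith
  have hXa : (X : ℝ) / a * (l * Y) ≤ 1 / 1024 := by
    rw [div_mul_eq_mul_div, div_le_iff₀ har0]
    have h1 : (u : ℝ) * V < a := by exact_mod_cast huV
    have h2 : 16 * (l * Y * X : ℝ) * 64 ≤ u * V := mul_le_mul hulY hVr (by norm_num) (by positivity)
    linarith
  have hXa2 : (X : ℝ) / a ≤ 1 / 1024 := by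
    refine le_trans ?_ hXa
    apply le_mul_of_one_le_right (by positivity) hlYr
  have hXa0 : (0 : ℝ) ≤ X / a := by positivity
  -- |Z - lY| ≤ 1/4 + Z X/a
  have hZl : |Z - l * Y| < 1 / 4 + Z * (X / a) := by
    have h1 : |J * (Z - l * Y)| < J * (1 / 4 + Z * (X / a)) := by
      calc |J * (Z - l * Y)| = |((C : ℝ) - l * Y * J) - (C - J * Z)| := by congr 1; ring
        _ ≤ |(C : ℝ) - l * Y * J| + |C - J * Z| := abs_sub _ _
        _ < J * (1 / 4 + Z * (X / a)) := by linarith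
    rw [abs_mul, abs_of_pos hJr] at h1
    exact lt_of_mul_lt_mul_left h1 hJr.le
  have hZ3 : Z ≤ 2 * (l * Y) := by
    have := (abs_lt.1 hZl).2
    have h2 : Z * (X / a) ≤ Z * (1 / 1024) := mul_le_mul_of_nonneg_left hXa2 hZ0
    linarith
  have hZX : Z * (X / a) ≤ 1 / 512 := by
    have : Z * (X / a) ≤ 2 * (l * Y) * (X / a) := mul_le_mul_of_nonneg_right hZ3 hXa0
    linarith
  have hfin : |((cN X V : ℤ) : ℝ) - ((l * Y : ℤ) : ℝ)| < 1 := by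
    push_cast
    rw [abs_lt] at hZl ⊢
    constructor <;> linarith
  have hfin' : |(cN X V : ℤ) - l * Y| < 1 := by exact_mod_cast hfin
  have := Int.abs_lt_one_iff.1 hfin'
  have h8 : (Y : ℤ) ∣ cN X V := ⟨l, by linarith⟩
  exact_mod_cast h8

end UP


namespace UP
open Pell

section defs
variable {R : Type*} [CommRing R]
def bV (Y μ w : R) : R := 64 * Y * μ ^ 2 * (w ^ 2 + 1)
def bu (X Y l : R) : R := 16 * l ^ 2 * X ^ 2 * Y ^ 2
def ba (X Y μ l w : R) : R := bu X Y l * (bV Y μ w + 1)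
def ba2 (X Y μ l w : R) : R := 2 * bu X Y l ^ 2 * bV Y μ w
def bC (X Y μ l w h : R) : R := 2 * X + 1 + (ba X Y μ l w - 1) * h
def bJ (X Y μ l w k : R) : R := X + 1 + (ba2 X Y μ l w - 1) * k
def cA1 (X Y μ l w h x y : R) : R := pDFI (ba X Y μ l w) (2 * X + 1) (bC X Y μ l w h) x y
def cA2 (X Y μ l w k : R) : R := pD (ba2 X Y μ l w) (bJ X Y μ l w k)
def cS (X Y μ l w : R) : R := 4 * ba X Y μ l w - 5
def cT (X Y μ b l w h : R) : R :=
  (2 * b * w ^ 2) ^ 2 - 1 + 2 * (2 * b * w ^ 2) * bC X Y μ l w h * (ba X Y μ l w - 2)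
def cR (X Y μ g l w h k x : R) : R :=
  x ^ 2 * l ^ 2 * (bJ X Y μ l w k ^ 2 * μ ^ 2
    - 16 * μ ^ 2 * (bC X Y μ l w h - l * Y * bJ X Y μ l w k) ^ 2
    - bJ X Y μ l w k ^ 2 * (2 * g + 1 - μ) ^ 2)
end defs

theorem bridge_back (X Y b μ : ℕ) (hX : 1 ≤ X) (hY : 1 ≤ Y) (hb : 1 ≤ b) (hbμ : b ≤ μ)
    (g l w h k x y : ℤ)
    (s1 : IsSquare (cA1 (X : ℤ) Y μ l w h x y)) (s2 : IsSquare (cA2 (X : ℤ) Y μ l w k))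
    (hd : cS (X : ℤ) Y μ l w ∣ cT (X : ℤ) Y μ b l w h)
    (hR : 0 < cR (X : ℤ) Y μ g l w h k x) :
    0 ≤ g ∧ g < μ ∧ (∃ i, b = 2 ^ i) ∧ Y ∣ Nat.centralBinom X := by
  have hμ : (0 : ℤ) < μ := by exact_mod_cast lt_of_lt_of_le hb hbμ
  have hx : x ≠ 0 := by rintro rfl; simp [cR] at hR
  have hl : l ≠ 0 := by rintro rfl; simp [cR] at hR
  have hV0 : 0 ≤ bV (Y : ℤ) μ w := by unfold bV; positivity
  have hu0 : 0 ≤ bu (X : ℤ) Y l := by unfold bu; positivity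
  obtain ⟨V, hV⟩ := Int.eq_ofNat_of_zero_le hV0
  obtain ⟨u, hu⟩ := Int.eq_ofNat_of_zero_le hu0
  have ha : ba (X : ℤ) Y μ l w = ((u * (V + 1) : ℕ) : ℤ) := by
    rw [ba, hV, hu]; push_cast; ring
  have ha2 : ba2 (X : ℤ) Y μ l w = ((2 * u ^ 2 * V : ℕ) : ℤ) := by
    rw [ba2, hV, hu]; push_cast; ring
  unfold cR at hR
  have hR2 := pos_of_mul_pos_right hR (by positivity)
  set C := bC (X : ℤ) Y μ l w h with hC
  set J := bJ (X : ℤ) Y μ l w k with hJ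
  have hsq := sq_nonneg (J * (2 * g + 1 - μ))
  have hsq2 := sq_nonneg (μ * (C - l * Y * J))
  have hR3 : 16 * (C - l * Y * J) ^ 2 < J ^ 2 := by
    have : (16 * (C - l * Y * J) ^ 2) * μ ^ 2 < J ^ 2 * μ ^ 2 := by linarith
    exact lt_of_mul_lt_mul_right this (by positivity)
  have hg : (2 * g + 1 - μ) ^ 2 < (μ : ℤ) ^ 2 := by
    have : J ^ 2 * (2 * g + 1 - μ) ^ 2 < J ^ 2 * (μ : ℤ) ^ 2 := by linarith
    exact lt_of_mul_lt_mul_left this (by positivity)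
  have hg' := abs_lt_of_sq_lt_sq' hg hμ.le
  have := bridge_back_core X Y b μ V u (u * (V + 1)) (2 * u ^ 2 * V) hX hY hb hbμ l w x y C J hl hx
    (by rw [← hV]; rfl) (by rw [← hu]; rfl) rfl rfl
    ⟨h, by rw [hC, bC, ha]; push_cast; ring⟩ ⟨k, by rw [hJ, bJ, ha2]; push_cast; ring⟩
    (by unfold cA1 at s1; rw [ha] at s1; push_cast at s1 ⊢; exact s1)
    (by unfold cA2 at s2; rw [ha2] at s2; exact s2)
    (by unfold cS cT at hd; rw [ha] at hd; exact hd) hR3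
  exact ⟨by omega, by omega, this.1, this.2⟩

theorem bridge_fwd (X Y μ j : ℕ) (hX : 1 ≤ X) (hY : 1 ≤ Y) (hj : j ≤ X)
    (hbμ : 4 ^ j ≤ μ) (g : ℤ) (hg0 : 0 ≤ g) (hgμ : g < μ) (hdvd : Y ∣ Nat.centralBinom X) :
    ∃ l w h k x y : ℤ, IsSquare (cA1 (X : ℤ) Y μ l w h x y) ∧ IsSquare (cA2 (X : ℤ) Y μ l w k) ∧
      cS (X : ℤ) Y μ l w ∣ cT (X : ℤ) Y μ ((4 ^ j : ℕ) : ℤ) l w h ∧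
      0 < cR (X : ℤ) Y μ g l w h k x := by
  obtain ⟨w, hw⟩ : ∃ w : ℕ, w = 2 ^ (X - j) := ⟨_, rfl⟩
  have hbw : 4 ^ j * w ^ 2 = 4 ^ X := by
    rw [hw, ← pow_mul, mul_comm (X - j), pow_mul, show 2 ^ 2 = 4 by norm_num, ← pow_add]
    congr 1; omega
  obtain ⟨V, hV⟩ : ∃ V : ℕ, V = 64 * Y * μ ^ 2 * (w ^ 2 + 1) := ⟨_, rfl⟩
  have hμ : 1 ≤ μ := le_trans (Nat.one_le_pow _ _ (by norm_num)) hbμ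
  have hYV : Y ∣ V := ⟨64 * μ ^ 2 * (w ^ 2 + 1), by rw [hV]; ring⟩
  obtain ⟨l, hl⟩ := (cN_dvd X V Y hYV).2 hdvd
  have hN1 := cN_pos X V
  have hl1 : 1 ≤ l := by
    rcases Nat.eq_zero_or_pos l with h | h
    · rw [h] at hl; omega
    · exact h
  obtain ⟨u, hu⟩ : ∃ u : ℕ, u = 16 * l ^ 2 * X ^ 2 * Y ^ 2 := ⟨_, rfl⟩
  obtain ⟨a, ha⟩ : ∃ a : ℕ, a = u * (V + 1) := ⟨_, rfl⟩
  obtain ⟨a', ha'⟩ : ∃ a' : ℕ, a' = 2 * u ^ 2 * V := ⟨_, rfl⟩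
  have hbV : bV (Y : ℤ) μ w = V := by rw [bV, hV]; push_cast; ring
  have hbu : bu (X : ℤ) Y l = u := by rw [bu, hu]; push_cast; ring
  have hba : ba (X : ℤ) Y μ l w = a := by rw [ba, hbV, hbu, ha]; push_cast; ring
  have hba2 : ba2 (X : ℤ) Y μ l w = a' := by rw [ba2, hbV, hbu, ha']; push_cast; ring
  have hV64 : 64 * (μ * 4 ^ X) ≤ V := by
    rw [hV, ← hbw]
    calc 64 * (μ * (4 ^ j * w ^ 2)) = 64 * 1 * (μ * 4 ^ j) * w ^ 2 := by ring
      _ ≤ 64 * Y * (μ * μ) * (w ^ 2 + 1) := by gcongr; omega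
      _ = _ := by ring
  have h4X : 1 ≤ 4 ^ X := Nat.one_le_pow _ _ (by norm_num)
  have hV1 : 64 ≤ V := by
    have : 1 ≤ μ * 4 ^ X := Nat.mul_pos hμ h4X
    omega
  have hu2 : u = 16 * (cN X V * X) ^ 2 := by rw [hu, hl]; ring
  have hNX : 1 ≤ cN X V * X := Nat.mul_pos hN1 hX
  have hu1 : 16 * (cN X V * X) ≤ u := by rw [hu2]; nlinarith
  have hXu : X ≤ cN X V * X := Nat.le_mul_of_pos_left _ hN1
  have hua : u ≤ a := by rw [ha]; exact Nat.le_mul_of_pos_right _ (by omega)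
  have haVu : u * V ≤ a := by rw [ha]; exact Nat.mul_le_mul_left _ (by omega)
  have a1 : 1 < a := by omega
  have a1' : 1 < a' := by
    rw [ha']
    have : 1 ≤ u ^ 2 := Nat.one_le_pow _ _ (by omega)
    have : 1 ≤ u ^ 2 * V := Nat.mul_pos this (by omega)
    linarith
  obtain ⟨x, y, hx, hs1⟩ := pell_exist a1 (show 1 ≤ 2 * X + 1 by omega)
  obtain ⟨h, hh⟩ := yn_mod_sub_one a1 (2 * X + 1)
  obtain ⟨k, hk⟩ := yn_mod_sub_one a1' (X + 1)
  have hC : bC (X : ℤ) Y μ l w h = yn a1 (2 * X + 1) := by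
    rw [bC, hba]; push_cast at hh; linarith
  have hJ : bJ (X : ℤ) Y μ l w k = yn a1' (X + 1) := by
    rw [bJ, hba2]; push_cast at hk; linarith
  refine ⟨l, w, h, k, x, y, ?_, ?_, ?_, ?_⟩
  · rw [cA1, hba, hC]; push_cast at hs1; exact hs1
  · rw [cA2, hba2, hJ]
    refine ⟨xn a1' (X + 1), ?_⟩
    have := pell_eq_int a1' (X + 1)
    rw [pD]; linarith
  · rw [cS, cT, hba, hC]
    have := pow_congr a1 (2 * X + 1)
    have e : (2 : ℤ) ^ (2 * X + 1) = 2 * ((4 ^ j : ℕ) : ℤ) * (w : ℤ) ^ 2 := by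
      have : (4 : ℤ) ^ X = ((4 ^ j : ℕ) : ℤ) * (w : ℤ) ^ 2 := by exact_mod_cast hbw.symm
      rw [mul_assoc, ← this, pow_succ, pow_mul]; norm_num; ring
    rw [← e]; exact this
  · rw [cR, hC, hJ]
    obtain ⟨C, hCd⟩ : ∃ C : ℤ, C = yn a1 (2 * X + 1) := ⟨_, rfl⟩
    obtain ⟨J, hJd⟩ : ∃ J : ℤ, J = yn a1' (X + 1) := ⟨_, rfl⟩
    have hClow : (2 * (a : ℤ) - 1) ^ (2 * X) ≤ C := by rw [hCd]; exact yn_lower_pow a1 (2 * X)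
    have hCup : C ≤ (2 * (a : ℤ)) ^ (2 * X) := by rw [hCd]; exact yn_upper_pow a1 (2 * X)
    have hJlow : (2 * (a' : ℤ) - 1) ^ X ≤ J := by rw [hJd]; exact yn_lower_pow a1' X
    have hJup : J ≤ (2 * (a' : ℤ)) ^ X := by rw [hJd]; exact yn_upper_pow a1' X
    have hJpos : 0 < J := lt_of_lt_of_le (by have : 0 < 2 * (a' : ℤ) - 1 := by omega
                                             positivity) hJlow
    rw [← hCd, ← hJd]
    have happ := approx X V u a a' C J (by omega) (by omega) ha ha'
      (by omega) (by exact_mod_cast hClow) (by exact_mod_cast hCup) (by exact_mod_cast hJlow)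
      (by exact_mod_cast hJup)
    have hr := cr_le X V (by omega)
    have hNr := cN_eq X V
    have hVr : (64 : ℝ) ≤ V := by exact_mod_cast hV1
    have hV64r : (64 : ℝ) * (μ * 4 ^ X) ≤ V := by exact_mod_cast hV64
    have hμr : (1 : ℝ) ≤ μ := by exact_mod_cast hμ
    have hZeq : ((V : ℝ) + 1) ^ (2 * X) / V ^ X = cN X V + cr X V / V ^ X := by
      have : ((V : ℝ) + 1) ^ (2 * X) = V ^ X * cN X V + cr X V := by exact_mod_cast hNr
      rw [this]; field_simp
    have hr0 : (0 : ℝ) ≤ cr X V / (V : ℝ) ^ X := by positivity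
    have hr1 : (cr X V : ℝ) / (V : ℝ) ^ X ≤ 1 / (64 * μ) := by
      rw [div_le_div_iff₀ (by positivity) (by positivity)]
      have h1 : (cr X V : ℝ) * V ≤ 4 ^ X * V ^ X := by exact_mod_cast hr
      have h3 : (64 * (μ * (4 : ℝ) ^ X)) * V ^ X ≤ V * V ^ X := mul_le_mul_of_nonneg_right hV64r (by positivity)
      have h5 : (cr X V : ℝ) * V * (64 * μ) ≤ 4 ^ X * V ^ X * (64 * μ) := mul_le_mul_of_nonneg_right h1 (by positivity)
      have h4 : (cr X V * (64 * μ) : ℝ) * V ≤ (1 * V ^ X) * V := by linarith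
      exact le_of_mul_le_mul_right h4 (by linarith)
    set Z := ((V : ℝ) + 1) ^ (2 * X) / V ^ X with hZdef
    have hJr : (0 : ℝ) < J := by exact_mod_cast hJpos
    have hNr1 : (1 : ℝ) ≤ cN X V := by exact_mod_cast hN1
    have hXr : (1 : ℝ) ≤ X := by exact_mod_cast hX
    have har0 : (0 : ℝ) < a := by have : 0 < a := by omega
                                  exact_mod_cast this
    have hZ2 : Z ≤ 2 * cN X V := by
      have : 1 / (64 * (μ : ℝ)) ≤ 1 := by rw [div_le_one (by positivity)]; linarith
      linarith
    have hZX : Z * (X / a) ≤ 1 / (64 * μ) := by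
      have h4Xr : (1 : ℝ) ≤ 4 ^ X := by exact_mod_cast h4X
      have h1 : Z * (X / a) ≤ 2 * cN X V * (X / a) := mul_le_mul_of_nonneg_right hZ2 (by positivity)
      refine h1.trans ?_
      rw [mul_div_assoc', div_le_div_iff₀ har0 (by positivity)]
      have h2 : (16 * (cN X V * X : ℝ)) ≤ u := by exact_mod_cast hu1
      have h3 : (u : ℝ) * V ≤ a := by exact_mod_cast haVu
      have h5 : (μ : ℝ) * 1 ≤ μ * 4 ^ X := by gcongr
      have h6 : (64 : ℝ) * μ ≤ V := by linarith
      have h4 : (16 * (cN X V * X : ℝ)) * (64 * μ) ≤ u * V := mul_le_mul h2 h6 (by positivity) (by positivity)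
      have h7 : 0 ≤ (cN X V * X : ℝ) * μ := by positivity
      linarith
    have hfin : |(C : ℝ) - cN X V * J| ≤ J * (1 / (32 * μ)) := by
      calc |(C : ℝ) - cN X V * J| = |(C - J * Z) + J * (Z - cN X V)| := by congr 1; ring
        _ ≤ |C - J * Z| + |J * (Z - cN X V)| := abs_add_le _ _
        _ = |C - J * Z| + J * (cr X V / V ^ X) := by
            rw [hZeq, add_sub_cancel_left, abs_mul, abs_of_pos hJr, abs_of_nonneg hr0]
        _ ≤ J * (1 / (64 * μ)) + J * (1 / (64 * μ)) := by
            have h1 : J * Z * (X / a) ≤ J * (1 / (64 * μ)) := by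
              rw [mul_assoc]; exact mul_le_mul_of_nonneg_left hZX hJr.le
            have h2 : (J : ℝ) * (cr X V / V ^ X) ≤ J * (1 / (64 * μ)) := mul_le_mul_of_nonneg_left hr1 hJr.le
            linarith
        _ = _ := by field_simp; norm_num
    have hfin2 : 32 * μ * |(C : ℝ) - cN X V * J| ≤ J := by
      have h0 : (0 : ℝ) < 32 * μ := by positivity
      have := mul_le_mul_of_nonneg_left hfin h0.le
      refine this.trans (le_of_eq ?_)
      field_simp
    have hfin3 : 32 * μ * |C - l * Y * J| ≤ J := by
      have e : (cN X V : ℝ) = l * Y := by rw [hl]; push_cast; ring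
      rw [e] at hfin2
      exact_mod_cast hfin2
    have hsq : (32 * μ * (C - l * Y * J)) ^ 2 ≤ J ^ 2 := by
      rw [← sq_abs (32 * μ * (C - l * Y * J))]
      have : |32 * μ * (C - l * Y * J)| ≤ J := by
        rw [abs_mul, abs_of_nonneg (by positivity)]; exact hfin3
      exact pow_le_pow_left₀ (abs_nonneg _) this 2
    have hgg : 1 ≤ (2 * g + 1) * (2 * μ - (2 * g + 1)) := one_le_mul_of_one_le_of_one_le (by omega) (by omega)
    have hJgg : J ^ 2 * 1 ≤ J ^ 2 * ((2 * g + 1) * (2 * μ - (2 * g + 1))) := mul_le_mul_of_nonneg_left hgg (sq_nonneg _)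
    have hJ2 : 0 < J ^ 2 := by positivity
    have hlz : (l : ℤ) ≠ 0 := by omega
    apply mul_pos (by positivity)
    linarith

end UP


namespace UP

section defs
variable {R : Type*} [CommRing R]
def rW (A1 A2 : R) : R := 1 + A1 ^ 2 + A2 ^ 2
def rq (S R' : R) : R := S ^ 2 * (2 * R' - 1)
def rp (A1 A2 S T R' n : R) : R := S ^ 2 * n + T ^ 2 - rq S R' * (T ^ 2 + rW A1 A2 ^ 2)
def rM (A1 A2 S T R' n : R) : R :=
  rp A1 A2 S T R' n ^ 4 - 2 * rp A1 A2 S T R' n ^ 2 * rq S R' ^ 2 * (A1 + A2 * rW A1 A2 ^ 2)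
    + rq S R' ^ 4 * (A1 - A2 * rW A1 A2 ^ 2) ^ 2
end defs

theorem isSquare_of_sq_mul {x r A : ℤ} (hr : r ≠ 0) (h : x ^ 2 = r ^ 2 * A) : ∃ s : ℤ, A = s ^ 2 := by
  have : r ^ 2 ∣ x ^ 2 := ⟨A, h⟩
  rw [Int.pow_dvd_pow_iff (by norm_num)] at this
  obtain ⟨s, hs⟩ := this
  refine ⟨s, ?_⟩
  have h2 : r ^ 2 * A = r ^ 2 * s ^ 2 := by rw [← h, hs]; ring
  exact mul_left_cancel₀ (by positivity) h2


theorem combine_aux (s t T : ℤ) (e1 e2 : ℤ) (h1 : |e1| = |s|) (h2 : |e2| = |t|) :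
    0 < T ^ 2 + rW (s ^ 2) (t ^ 2) ^ 2 + e1 + e2 * rW (s ^ 2) (t ^ 2) := by
  have hs4 : |s| ≤ (s ^ 2) ^ 2 := by
    have h := sq_abs s
    rcases lt_or_ge |s| 1 with h0 | h0
    · have : |s| = 0 := by have := abs_nonneg s; omega
      rw [this]; positivity
    · rw [← h]; nlinarith [sq_nonneg (|s| ^ 2 - 1), sq_nonneg (|s| - 1)]
  have ht4 : |t| ≤ (t ^ 2) ^ 2 := by
    have h := sq_abs t
    rcases lt_or_ge |t| 1 with h0 | h0
    · have : |t| = 0 := by have := abs_nonneg t; omega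
      rw [this]; positivity
    · rw [← h]; nlinarith [sq_nonneg (|t| ^ 2 - 1), sq_nonneg (|t| - 1)]
  have hWd : rW (s ^ 2) (t ^ 2) = 1 + (s ^ 2) ^ 2 + (t ^ 2) ^ 2 := rfl
  set W := rW (s ^ 2) (t ^ 2)
  have hW : |s| + |t| + 1 ≤ W := by linarith
  have hs0 := abs_nonneg s
  have ht0 := abs_nonneg t
  have he1 := neg_abs_le e1
  have he2 := neg_abs_le e2
  rw [h1] at he1
  rw [h2] at he2
  have hW1 : 1 ≤ W := by linarith
  have h3 : -|t| * W ≤ e2 * W := mul_le_mul_of_nonneg_right he2 (by linarith)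
  have h4 : (|s| + |t| + 1) * W ≤ W * W := mul_le_mul_of_nonneg_right hW (by linarith)
  have h5 : |s| * 1 ≤ |s| * W := mul_le_mul_of_nonneg_left hW1 hs0
  have h6 := sq_nonneg T
  nlinarith

theorem combine_fwd (A1 A2 S T R : ℤ) (hS : S ≠ 0) (s1 : IsSquare A1) (s2 : IsSquare A2) (hd : S ∣ T)
    (hR : 0 < R) : ∃ n : ℕ, rM A1 A2 S T R n = 0 := by
  obtain ⟨s, rfl⟩ := s1
  obtain ⟨t, rfl⟩ := s2
  obtain ⟨c, rfl⟩ := hd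
  rw [← pow_two s, ← pow_two t]
  have hp := combine_aux s t (S * c) |s| |t| (abs_abs _) (abs_abs _)
  set W := rW (s ^ 2) (t ^ 2)
  have hcS : c ^ 2 ≤ (S * c) ^ 2 := by
    rw [mul_pow]
    have : 0 < S ^ 2 := by positivity
    nlinarith [sq_nonneg c]
  have hW0 : 0 ≤ W := by show 0 ≤ 1 + (s ^ 2) ^ 2 + (t ^ 2) ^ 2; positivity
  have h0 : 0 ≤ (2 * R - 1) * ((S * c) ^ 2 + W ^ 2 + |s| + |t| * W) - c ^ 2 := by
    have h1 : 1 * ((S * c) ^ 2 + W ^ 2 + |s| + |t| * W) ≤ (2 * R - 1) * ((S * c) ^ 2 + W ^ 2 + |s| + |t| * W) :=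
      mul_le_mul_of_nonneg_right (by linarith) hp.le
    have h2 : 0 ≤ W ^ 2 := sq_nonneg _
    have h3 : 0 ≤ |s| := abs_nonneg _
    have h4 : 0 ≤ |t| * W := by positivity
    linarith
  obtain ⟨n, hn⟩ := Int.eq_ofNat_of_zero_le h0
  refine ⟨n, ?_⟩
  have hs := sq_abs s
  have ht := sq_abs t
  have hpv : rp (s ^ 2) (t ^ 2) S (S * c) R n = rq S R * (|s| + |t| * W) := by
    show S ^ 2 * (n : ℤ) + (S * c) ^ 2 - rq S R * ((S * c) ^ 2 + W ^ 2) = _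
    rw [← hn, rq]; ring
  unfold rM
  rw [hpv]
  change (rq S R * (|s| + |t| * W)) ^ 4 - 2 * (rq S R * (|s| + |t| * W)) ^ 2 * rq S R ^ 2 * (s ^ 2 + t ^ 2 * W ^ 2) + rq S R ^ 4 * (s ^ 2 - t ^ 2 * W ^ 2) ^ 2 = 0
  rw [← hs, ← ht]; ring

theorem combine_back (A1 A2 S T R : ℤ) (hS : S ≠ 0) (n : ℕ) (h : rM A1 A2 S T R n = 0) :
    IsSquare A1 ∧ IsSquare A2 ∧ S ∣ T ∧ 0 < R := by
  obtain ⟨p, hp⟩ : ∃ p, p = rp A1 A2 S T R n := ⟨_, rfl⟩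
  obtain ⟨q, hq⟩ : ∃ q, q = rq S R := ⟨_, rfl⟩
  have hq0 : q ≠ 0 := by
    rw [hq, rq]; apply mul_ne_zero (by positivity); omega
  obtain ⟨W, hW⟩ : ∃ W, W = rW A1 A2 := ⟨_, rfl⟩
  have hW0 : W ≠ 0 := by rw [hW, rW]; positivity
  have hpe : p = S ^ 2 * n + T ^ 2 - q * (T ^ 2 + W ^ 2) := by rw [hp, rp, hq, hW]
  unfold rM at h
  rw [← hp, ← hq, ← hW] at h
  have key : ∃ s t : ℤ, A1 = s ^ 2 ∧ A2 = t ^ 2 := by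
    by_cases hp0 : p = 0
    · rw [hp0] at h
      have h1 : q ^ 4 * (A1 - A2 * W ^ 2) ^ 2 = 0 := by linarith
      have h2 : A1 - A2 * W ^ 2 = 0 := by
        rcases mul_eq_zero.1 h1 with h | h
        · exact absurd h (by positivity)
        · exact pow_eq_zero_iff (by norm_num) |>.1 h
      have hA2 : A2 = 0 := by
        by_contra hne
        have h3 : A1 = A2 * W ^ 2 := by linarith
        have h4 : (1 : ℤ) ≤ |A2| := Int.one_le_abs hne
        have h5 : |A1| < W := by
          rw [hW, rW]
          nlinarith [sq_abs A1, sq_nonneg A2, sq_nonneg (|A1| - 1), abs_nonneg A1]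
        have h6 : |A1| = |A2| * W ^ 2 := by rw [h3, abs_mul, abs_of_nonneg (sq_nonneg W)]
        have h7 : 0 < W := lt_of_le_of_lt (abs_nonneg _) h5
        have h8 : 1 * W ^ 2 ≤ |A2| * W ^ 2 := mul_le_mul_of_nonneg_right h4 (sq_nonneg _)
        nlinarith
      refine ⟨0, 0, ?_, ?_⟩
      · rw [hA2] at h2; linarith
      · rw [hA2]; norm_num
    · have h1 : (p ^ 2 + q ^ 2 * (A1 - A2 * W ^ 2)) ^ 2 = (2 * p * q) ^ 2 * A1 := by linear_combination h
      have h2 : (p ^ 2 - q ^ 2 * (A1 - A2 * W ^ 2)) ^ 2 = (2 * p * q * W) ^ 2 * A2 := by linear_combination h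
      obtain ⟨s, hs⟩ := isSquare_of_sq_mul (by positivity) h1
      obtain ⟨t, ht⟩ := isSquare_of_sq_mul (by positivity) h2
      exact ⟨s, t, hs, ht⟩
  obtain ⟨s, t, rfl, rfl⟩ := key
  have hfac : (p - q * (s + t * W)) * (p - q * (s - t * W)) * (p - q * (-s + t * W)) * (p - q * (-s - t * W)) = 0 := by
    linear_combination h
  have hex : ∃ e1 e2 : ℤ, |e1| = |s| ∧ |e2| = |t| ∧ p = q * (e1 + e2 * W) := by
    rcases mul_eq_zero.1 hfac with h | h
    · rcases mul_eq_zero.1 h with h | h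
      · rcases mul_eq_zero.1 h with h | h
        · exact ⟨s, t, rfl, rfl, by linarith⟩
        · exact ⟨s, -t, rfl, abs_neg _, by linarith⟩
      · exact ⟨-s, t, abs_neg _, rfl, by linarith⟩
    · exact ⟨-s, -t, abs_neg _, abs_neg _, by linarith⟩
  obtain ⟨e1, e2, h1, h2, hpq⟩ := hex
  have hpos := combine_aux s t T e1 e2 h1 h2
  rw [← hW] at hpos
  set Q := T ^ 2 + W ^ 2 + e1 + e2 * W with hQ
  have hmain : S ^ 2 * n + T ^ 2 = S ^ 2 * ((2 * R - 1) * Q) := by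
    have : S ^ 2 * n + T ^ 2 = q * Q := by rw [hQ]; linear_combination hpq - hpe
    rw [this, hq, rq]; ring
  refine ⟨⟨s, pow_two s⟩, ⟨t, pow_two t⟩, ?_, ?_⟩
  · have : S ^ 2 ∣ T ^ 2 := ⟨(2 * R - 1) * Q - n, by linear_combination hmain⟩
    exact (Int.pow_dvd_pow_iff (by norm_num)).1 this
  · by_contra hR
    have h3 : 0 ≤ S ^ 2 * (n : ℤ) + T ^ 2 := by positivity
    rw [hmain] at h3
    have h4 : 0 < S ^ 2 := by positivity
    have h5 : (2 * R - 1) * Q < 0 := mul_neg_of_neg_of_pos (by omega) hpos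
    have := mul_neg_of_pos_of_neg h4 h5
    linarith

end UP


namespace UP

theorem round_exists (A B : ℤ) (hA : 0 < A) : ∃ k : ℤ, 2 * (B + k * A) ≤ A ∧ -A ≤ 2 * (B + k * A) := by
  refine ⟨-((2 * B + A) / (2 * A)), ?_, ?_⟩
  · have h1 := Int.emod_add_mul_ediv (2 * B + A) (2 * A)
    have h2 := Int.emod_lt_of_pos (2 * B + A) (show 0 < 2 * A by linarith)
    nlinarith
  · have h1 := Int.emod_add_mul_ediv (2 * B + A) (2 * A)
    have h2 := Int.emod_nonneg (2 * B + A) (show 2 * A ≠ 0 by omega)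
    nlinarith

theorem binary_reduce (D : ℤ) (hD : 0 < D) : ∀ (n : ℕ) (A B C : ℤ), A ≤ n → 0 < A → A * C - B ^ 2 = D →
    ∃ α β γ δ : ℤ, α * δ - β * γ = 1 ∧ 0 < A * α ^ 2 + 2 * B * α * γ + C * γ ^ 2 ∧
      3 * (A * α ^ 2 + 2 * B * α * γ + C * γ ^ 2) ^ 2 ≤ 4 * D := by
  intro n
  induction n with
  | zero => intro A B C h1 h2; push_cast at h1; omega
  | succ n ih =>
    intro A B C hn hA hdet
    obtain ⟨k, hk1, hk2⟩ := round_exists A B hA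
    set B' := B + k * A with hB'
    set C' := A * k ^ 2 + 2 * B * k + C with hC'
    have hdet' : C' * A - B' ^ 2 = D := by rw [hC', hB', ← hdet]; ring
    have hC0 : 0 < C' := by
      by_contra hneg
      have : C' * A ≤ 0 := mul_nonpos_of_nonpos_of_nonneg (by linarith) hA.le
      nlinarith [sq_nonneg B']
    by_cases hle : A ≤ C'
    · refine ⟨1, 0, 0, 1, by norm_num, by linarith, ?_⟩
      have h1 : 4 * B' ^ 2 ≤ A ^ 2 := by nlinarith
      have h2 : A * A ≤ C' * A := mul_le_mul_of_nonneg_right hle hA.le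
      nlinarith
    · have h1 : C' ≤ (n : ℤ) := by push_cast at hn; omega
      obtain ⟨α, β, γ, δ, h2, h3, h4⟩ := ih C' B' A h1 hC0 hdet'
      have e : A * (k * α + γ) ^ 2 + 2 * B * (k * α + γ) * α + C * α ^ 2 =
        C' * α ^ 2 + 2 * B' * α * γ + A * γ ^ 2 := by rw [hC', hB']; ring
      refine ⟨k * α + γ, -(k * β + δ), α, -β, by linear_combination h2, ?_, ?_⟩
      · rw [e]; exact h3
      · rw [e]; exact h4

theorem binary_one (A B C : ℤ) (hA : 0 < A) (hdet : A * C - B ^ 2 = 1) (y z : ℤ) :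
    ∃ p q : ℤ, A * y ^ 2 + 2 * B * y * z + C * z ^ 2 = p ^ 2 + q ^ 2 := by
  obtain ⟨α, β, γ, δ, h1, h2, h3⟩ := binary_reduce 1 one_pos A.toNat A B C (by omega) hA hdet
  set G := A * α ^ 2 + 2 * B * α * γ + C * γ ^ 2 with hG
  have hG1 : G = 1 := by nlinarith
  set H := A * α * β + B * (α * δ + β * γ) + C * γ * δ with hH
  set K := A * β ^ 2 + 2 * B * β * δ + C * δ ^ 2 with hK
  have hd : G * K - H ^ 2 = 1 := by
    have : G * K - H ^ 2 = (A * C - B ^ 2) * (α * δ - β * γ) ^ 2 := by rw [hG, hK, hH]; ring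
    rw [this, hdet, h1]; norm_num
  obtain ⟨Y, hY⟩ : ∃ Y, Y = δ * y - β * z := ⟨_, rfl⟩
  obtain ⟨Z, hZ⟩ : ∃ Z, Z = -γ * y + α * z := ⟨_, rfl⟩
  have hy : y = α * Y + β * Z := by rw [hY, hZ]; linear_combination -y * h1
  have hz : z = γ * Y + δ * Z := by rw [hY, hZ]; linear_combination -z * h1
  refine ⟨Y + H * Z, Z, ?_⟩
  have : A * y ^ 2 + 2 * B * y * z + C * z ^ 2 = G * Y ^ 2 + 2 * H * Y * Z + K * Z ^ 2 := by
    rw [hG, hH, hK, hy, hz]; ring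
  rw [this, hG1]
  rw [hG1] at hd
  linear_combination Z ^ 2 * hd

theorem ternary_lt (a a' t' G : ℤ) (ha : 0 < a) (ha1 : a ≠ 1) (haG : a' * a - t' ^ 2 = G)
    (h3 : 3 * G ^ 2 ≤ 4 * a) (hk1 : 2 * t' ≤ a) (hk2 : -a ≤ 2 * t') : a' < a := by
  by_contra hge
  have h5 : a * a ≤ a' * a := mul_le_mul_of_nonneg_right (by linarith) ha.le
  have h6 : (2 * t') ^ 2 ≤ a ^ 2 := sq_le_sq' (by linarith) hk1
  have h7 : 3 * a ^ 2 ≤ 4 * G := by linarith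
  have h8 : 2 ≤ a := by omega
  have h9 : (3 * a ^ 2) ^ 2 ≤ (4 * G) ^ 2 := pow_le_pow_left₀ (by positivity) h7 2
  have h11 : 4 ≤ a ^ 2 := by nlinarith
  have h10 : 4 * 2 * a ≤ a ^ 2 * a * a := by
    have := mul_le_mul h11 h8 (by norm_num) (by positivity)
    exact mul_le_mul_of_nonneg_right this ha.le
  have h12 : 3 * (3 * a ^ 2) ^ 2 ≤ 64 * a := by linarith
  have h13 : (3 * a ^ 2) ^ 2 = 9 * (a ^ 2 * a * a) := by ring
  linarith

set_option maxHeartbeats 1000000 in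
theorem ternary : ∀ (n : ℕ) (a b c r s t : ℤ), a ≤ n → 0 < a → 0 < a * b - t ^ 2 →
    a * b * c + 2 * r * s * t - a * r ^ 2 - b * s ^ 2 - c * t ^ 2 = 1 →
    ∀ x y z : ℤ, ∃ p q w : ℤ, a * x ^ 2 + b * y ^ 2 + c * z ^ 2 + 2 * r * y * z + 2 * s * x * z + 2 * t * x * y
      = p ^ 2 + q ^ 2 + w ^ 2 := by
  intro n
  induction n with
  | zero => intro a b c r s t h1 h2; push_cast at h1; omega
  | succ n ih =>
    intro a b c r s t hn ha hδ hdet x y z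
    have hgdet : (a * b - t ^ 2) * (a * c - s ^ 2) - (a * r - s * t) ^ 2 = a := by
      linear_combination a * hdet
    by_cases ha1 : a = 1
    · subst ha1
      obtain ⟨p, q, h⟩ := binary_one (1 * b - t ^ 2) (1 * r - s * t) (1 * c - s ^ 2) hδ hgdet y z
      refine ⟨x + t * y + s * z, p, q, ?_⟩
      linear_combination h
    · obtain ⟨α, β, γ, δ, h1, h2, h3⟩ := binary_reduce a ha _ _ _ _ (Int.self_le_toNat _) hδ hgdet
      set G := (a * b - t ^ 2) * α ^ 2 + 2 * (a * r - s * t) * α * γ + (a * c - s ^ 2) * γ ^ 2 with hG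
      obtain ⟨k, hk1, hk2⟩ := round_exists a (t * α + s * γ) ha
      obtain ⟨t', ht'⟩ : ∃ t', t' = t * α + s * γ + k * a := ⟨_, rfl⟩
      rw [← ht'] at hk1 hk2
      obtain ⟨a', ha'⟩ : ∃ a', a' = a * k ^ 2 + b * α ^ 2 + c * γ ^ 2 + 2 * r * α * γ + 2 * s * k * γ + 2 * t * k * α := ⟨_, rfl⟩
      obtain ⟨c', hc'⟩ : ∃ c', c' = b * β ^ 2 + c * δ ^ 2 + 2 * r * β * δ := ⟨_, rfl⟩
      obtain ⟨r', hr'⟩ : ∃ r', r' = t * β + s * δ := ⟨_, rfl⟩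
      obtain ⟨s', hs'⟩ : ∃ s', s' = b * α * β + c * γ * δ + r * (α * δ + β * γ) + s * k * δ + t * k * β := ⟨_, rfl⟩
      have haG : a' * a - t' ^ 2 = G := by rw [ha', ht', hG]; ring
      have ha0 : 0 < a' := by
        by_contra hneg
        have : a' * a ≤ 0 := mul_nonpos_of_nonpos_of_nonneg (by linarith) ha.le
        linarith [sq_nonneg t']
      have hlt : a' < a := by
        exact ternary_lt a a' t' G ha ha1 haG h3 hk1 hk2
      have hdet' : a' * a * c' + 2 * r' * s' * t' - a' * r' ^ 2 - a * s' ^ 2 - c' * t' ^ 2 = 1 := by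
        have : a' * a * c' + 2 * r' * s' * t' - a' * r' ^ 2 - a * s' ^ 2 - c' * t' ^ 2
          = (a * b * c + 2 * r * s * t - a * r ^ 2 - b * s ^ 2 - c * t ^ 2) * (α * δ - β * γ) ^ 2 := by
          rw [ha', hc', hr', hs', ht']; ring
        rw [this, hdet, h1]; norm_num
      obtain ⟨X, hX⟩ : ∃ Y, Y = δ * y - β * z := ⟨_, rfl⟩
      obtain ⟨Z, hZ⟩ : ∃ Z, Z = -γ * y + α * z := ⟨_, rfl⟩
      have hy : y = α * X + β * Z := by rw [hX, hZ]; linear_combination -y * h1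
      have hz : z = γ * X + δ * Z := by rw [hX, hZ]; linear_combination -z * h1
      obtain ⟨Y, hY⟩ : ∃ Y, x = Y + k * X := ⟨x - k * X, by ring⟩
      obtain ⟨p, q, w, h⟩ := ih a' a c' r' s' t' (by push_cast at hn; omega) ha0 (by rw [haG]; exact h2) hdet' X Y Z
      refine ⟨p, q, w, ?_⟩
      rw [← h, hy, hz, hY, ha', hc', hr', hs', ht']; ring

theorem three_squares (n : ℕ) : ∃ p q w : ℤ, (4 * n + 2 : ℤ) = p ^ 2 + q ^ 2 + w ^ 2 := by
  obtain ⟨p, hpgt, hp, hpm⟩ := Nat.forall_exists_prime_gt_and_modEq (4 * (4 * n + 2))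
    (q := 4 * (4 * n + 2)) (a := 4 * n + 1) (by omega) (by
      have h : Nat.Coprime (4 * n + 1) (4 * n + 2) := by
        rw [show 4 * n + 2 = 4 * n + 1 + 1 by ring]; simp
      refine Nat.Coprime.mul_right ?_ h
      rw [show 4 * n + 1 = 1 + n * 4 by ring]; simp)
  obtain ⟨k, hk⟩ : ∃ k, p = (4 * n + 2) * (4 * k + 1) - 1 := by
    have h1 : p % (4 * (4 * n + 2)) = 4 * n + 1 := by
      rw [hpm]; exact Nat.mod_eq_of_lt (by omega)
    have h2 := Nat.mod_add_div p (4 * (4 * n + 2))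
    refine ⟨p / (4 * (4 * n + 2)), ?_⟩
    rw [h1] at h2
    have : (4 * n + 2) * (4 * (p / (4 * (4 * n + 2))) + 1) = 4 * (4 * n + 2) * (p / (4 * (4 * n + 2))) + (4 * n + 2) := by ring
    omega
  obtain ⟨d, hd⟩ : ∃ d, d = 4 * k + 1 := ⟨_, rfl⟩
  have hpd : p + 1 = (4 * n + 2) * d := by
    rw [hk, hd]; have : 1 ≤ (4 * n + 2) * (4 * k + 1) := Nat.mul_pos (by omega) (by omega)
    omega
  have hp4 : p % 4 = 1 := by
    have : p + 1 = 4 * (n * d + 2 * k) + 2 := by rw [hpd, hd]; ring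
    omega
  have : Fact p.Prime := ⟨hp⟩
  have hdodd : Odd d := ⟨2 * k, by omega⟩
  have hpodd : Odd p := Nat.odd_iff.2 (by omega)
  have hJ : jacobiSym (-(d : ℤ)) p = 1 := by
    rw [jacobiSym.neg _ hpodd, ZMod.χ₄_nat_one_mod_four hp4, one_mul,
      jacobiSym.quadratic_reciprocity_one_mod_four (by omega) hpodd]
    have : jacobiSym (p : ℤ) d = jacobiSym (-1) d := by
      apply jacobiSym.mod_left'
      apply Int.ModEq.symm
      rw [Int.modEq_iff_dvd]
      exact ⟨4 * n + 2, by have : (p : ℤ) + 1 = (4 * n + 2) * d := by exact_mod_cast hpd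
                           linarith⟩
    rw [this, jacobiSym.at_neg_one hdodd, ZMod.χ₄_nat_one_mod_four (by omega)]
  rw [← jacobiSym.legendreSym.to_jacobiSym] at hJ
  have hsq : IsSquare (((-(d : ℤ) : ℤ)) : ZMod p) := by
    have hne : (((-(d : ℤ) : ℤ)) : ZMod p) ≠ 0 := by
      intro h0
      rw [legendreSym.eq_zero_iff p _ |>.2 h0] at hJ
      exact absurd hJ (by norm_num)
    exact (legendreSym.eq_one_iff p hne).1 hJ
  obtain ⟨h', hh'⟩ := hsq
  obtain ⟨h, rfl⟩ := ZMod.intCast_surjective h'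
  have hdvd : (p : ℤ) ∣ d + h ^ 2 := by
    rw [← ZMod.intCast_zmod_eq_zero_iff_dvd]
    push_cast at hh' ⊢
    rw [pow_two, ← hh']; ring
  obtain ⟨a, ha⟩ := hdvd
  have hp0 : (0 : ℤ) < p := by exact_mod_cast hp.pos
  have hd0 : (0 : ℤ) < d := by rw [hd]; positivity
  have ha0 : 0 < a := by
    have : 0 < (p : ℤ) * a := by rw [← ha]; positivity
    exact pos_of_mul_pos_right this hp0.le
  have hpd' : (p : ℤ) + 1 = (4 * n + 2) * d := by exact_mod_cast hpd
  obtain ⟨x, y, z, hxyz⟩ := ternary a.toNat a p (4 * n + 2) 0 1 h (Int.self_le_toNat _) ha0 (by linarith)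
    (by linear_combination -(4 * n + 2 : ℤ) * ha - hpd') 0 0 1
  exact ⟨x, y, z, by linarith⟩

/-- every natural number is of the form `u^2+u+v^2+v+t^2` -/
theorem three_squares' (n : ℕ) : ∃ u v t : ℤ, (n : ℤ) = u ^ 2 + u + v ^ 2 + v + t ^ 2 := by
  obtain ⟨p, q, w, h⟩ := three_squares n
  have key : ∀ p q w : ℤ, (4 * n + 2 : ℤ) = p ^ 2 + q ^ 2 + w ^ 2 → Odd p → Odd q → 
      ∃ u v t : ℤ, (n : ℤ) = u ^ 2 + u + v ^ 2 + v + t ^ 2 := by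
    rintro p q w h ⟨u, rfl⟩ ⟨v, rfl⟩
    rcases Int.even_or_odd' w with ⟨t, rfl | rfl⟩
    · exact ⟨u, v, t, by linarith⟩
    · exfalso
      have : 2 * (2 * (n : ℤ) - 2 * u ^ 2 - 2 * u - 2 * v ^ 2 - 2 * v - 2 * t ^ 2 - 2 * t) = 1 := by linarith
      omega
  rcases Int.even_or_odd p with hp | hp <;> rcases Int.even_or_odd q with hq | hq <;>
    rcases Int.even_or_odd w with hw | hw
  · exfalso
    obtain ⟨p, rfl⟩ := hp; obtain ⟨q, rfl⟩ := hq; obtain ⟨w, rfl⟩ := hw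
    have : 4 * (p ^ 2 + q ^ 2 + w ^ 2 - n) = 2 := by linarith
    omega
  · exfalso
    obtain ⟨p, rfl⟩ := hp; obtain ⟨q, rfl⟩ := hq; obtain ⟨w, rfl⟩ := hw
    have : 2 * (2 * p ^ 2 + 2 * q ^ 2 + 2 * w ^ 2 + 2 * w - 2 * n) = 1 := by linarith
    omega
  · exfalso
    obtain ⟨p, rfl⟩ := hp; obtain ⟨q, rfl⟩ := hq; obtain ⟨w, rfl⟩ := hw
    have : 2 * (2 * p ^ 2 + 2 * q ^ 2 + 2 * w ^ 2 + 2 * q - 2 * n) = 1 := by linarith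
    omega
  · exact key q w p (by linarith) hq hw
  · exfalso
    obtain ⟨p, rfl⟩ := hp; obtain ⟨q, rfl⟩ := hq; obtain ⟨w, rfl⟩ := hw
    have : 2 * (2 * p ^ 2 + 2 * q ^ 2 + 2 * w ^ 2 + 2 * p - 2 * n) = 1 := by linarith
    omega
  · exact key p w q (by linarith) hp hw
  · exact key p q w h hp hq
  · exact key p q w h hp hq

end UP


namespace UP

/-- binary digit sum -/
def pc (n : ℕ) : ℕ := (Nat.digits 2 n).sum

theorem pc_zero : pc 0 = 0 := by simp [pc]

theorem pc_eq (n : ℕ) : pc n = n % 2 + pc (n / 2) := by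
  rcases Nat.eq_zero_or_pos n with rfl | h
  · simp [pc]
  · unfold pc
    rw [Nat.digits_def' (by norm_num) h, List.sum_cons]

theorem pc_two_mul (n : ℕ) : pc (2 * n) = pc n := by
  rw [pc_eq]; simp

theorem pc_two_mul_add_one (n : ℕ) : pc (2 * n + 1) = pc n + 1 := by
  rw [pc_eq, show (2 * n + 1) % 2 = 1 by omega, show (2 * n + 1) / 2 = n by omega, add_comm]

theorem pc_split (k : ℕ) : ∀ (A C : ℕ), C < 2 ^ k → pc (A * 2 ^ k + C) = pc A + pc C := by
  induction k with
  | zero => intro A C h; have : C = 0 := by simpa using h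
            subst this; simp [pc_zero]
  | succ k ih =>
    intro A C h
    rw [pc_eq (A * 2 ^ (k + 1) + C), pc_eq C]
    have e : A * 2 ^ (k + 1) + C = 2 * (A * 2 ^ k + C / 2) + C % 2 := by
      rw [pow_succ]; have := Nat.div_add_mod C 2; linarith
    have h1 : (A * 2 ^ (k + 1) + C) % 2 = C % 2 := by omega
    have h2 : (A * 2 ^ (k + 1) + C) / 2 = A * 2 ^ k + C / 2 := by omega
    rw [h1, h2, ih A (C / 2) (by rw [pow_succ] at h; omega)]
    ring

theorem pc_compl (k : ℕ) : ∀ S : ℕ, S < 2 ^ k → pc (2 ^ k - 1 - S) + pc S = k := by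
  induction k with
  | zero => intro S h; have : S = 0 := by simpa using h
            subst this; simp [pc_zero]
  | succ k ih =>
    intro S h
    have hS : S / 2 < 2 ^ k := by rw [pow_succ] at h; omega
    have := ih (S / 2) hS
    rw [pc_eq (2 ^ (k + 1) - 1 - S), pc_eq S]
    have h1 : (2 ^ (k + 1) - 1 - S) / 2 = 2 ^ k - 1 - S / 2 := by rw [pow_succ] at h ⊢; omega
    have h2 : (2 ^ (k + 1) - 1 - S) % 2 + S % 2 = 1 := by rw [pow_succ] at h ⊢; omega
    rw [h1]; omega

theorem pc_succ_le (n : ℕ) : pc (n + 1) ≤ pc n + 1 := by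
  induction n using Nat.strong_induction_on with
  | _ n ih =>
    rcases Nat.even_or_odd' n with ⟨m, rfl | rfl⟩
    · rw [pc_two_mul_add_one, pc_two_mul]
    · rw [show 2 * m + 1 + 1 = 2 * (m + 1) by ring, pc_two_mul, pc_two_mul_add_one]
      have := ih m (by omega)
      omega

theorem land_eq_zero_iff (S T : ℕ) : S &&& T = 0 ↔ (S / 2 &&& T / 2 = 0) ∧ ¬ (S % 2 = 1 ∧ T % 2 = 1) := by
  rw [← Nat.and_div_two, ← Nat.and_mod_two_eq_one]
  omega

theorem pc_add (S : ℕ) : ∀ T : ℕ, pc (S + T) ≤ pc S + pc T ∧ (pc (S + T) = pc S + pc T ↔ S &&& T = 0) := by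
  induction S using Nat.strong_induction_on with
  | _ S ih =>
    intro T
    rcases Nat.eq_zero_or_pos S with rfl | hS
    · simp [pc_zero]
    · have h := ih (S / 2) (by omega) (T / 2)
      rw [land_eq_zero_iff, ← h.2, pc_eq S, pc_eq T]
      rcases Nat.mod_two_eq_zero_or_one S with h1 | h1 <;> rcases Nat.mod_two_eq_zero_or_one T with h2 | h2
      · rw [pc_eq (S + T), show (S + T) / 2 = S / 2 + T / 2 by omega, show (S + T) % 2 = 0 by omega]; omega
      · rw [pc_eq (S + T), show (S + T) / 2 = S / 2 + T / 2 by omega, show (S + T) % 2 = 1 by omega]; omega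
      · rw [pc_eq (S + T), show (S + T) / 2 = S / 2 + T / 2 by omega, show (S + T) % 2 = 1 by omega]; omega
      · rw [pc_eq (S + T), show (S + T) / 2 = (S / 2 + T / 2) + 1 by omega, show (S + T) % 2 = 0 by omega]
        have := pc_succ_le (S / 2 + T / 2)
        omega

theorem two_pow_dvd_centralBinom (m X : ℕ) : 2 ^ m ∣ Nat.centralBinom X ↔ m ≤ pc X := by
  have hv : padicValNat 2 (Nat.centralBinom X) = pc X := by
    have := sub_one_mul_padicValNat_choose_eq_sub_sum_digits' (p := 2) (n := X) (k := X)
    rw [Nat.centralBinom, two_mul]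
    have h2 : (Nat.digits 2 (X + X)).sum = pc X := by rw [← two_mul]; exact pc_two_mul X
    rw [h2] at this
    change (2 - 1) * padicValNat 2 ((X + X).choose X) = pc X + pc X - pc X at this
    omega
  have : Fact (Nat.Prime 2) := ⟨Nat.prime_two⟩
  rw [padicValNat_dvd_iff_le (Nat.centralBinom_ne_zero X), hv]

theorem central_iff (k S T : ℕ) (hS : S < 2 ^ k) (hT : T < 2 ^ k) :
    (2 ^ k) ^ 2 ∣ Nat.centralBinom ((2 ^ k - 1) * ((S + T + 1) * 2 ^ k + T + 1)) ↔ S &&& T = 0 := by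
  have e : (2 ^ k - 1) * ((S + T + 1) * 2 ^ k + T + 1) =
      ((S + T) * 2 ^ k + (2 ^ k - 1 - S)) * 2 ^ k + (2 ^ k - 1 - T) := by
    obtain ⟨s, hs⟩ := Nat.exists_eq_add_of_lt hS
    obtain ⟨t, ht⟩ := Nat.exists_eq_add_of_lt hT
    have h1 : 2 ^ k - 1 = S + s := by omega
    have h2 : 2 ^ k - 1 - S = s := by omega
    have h3 : 2 ^ k - 1 - T = t := by omega
    rw [h2, h3, h1]
    zify at hs ht ⊢
    generalize (2 : ℤ) ^ k = N at *
    have hs' : (s : ℤ) = N - S - 1 := by linarith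
    have ht' : (t : ℤ) = N - T - 1 := by linarith
    rw [hs', ht']
    ring
  rw [← pow_mul, two_pow_dvd_centralBinom, e, pc_split k _ _ (by omega), pc_split k _ _ (by omega)]
  have h1 := pc_compl k S hS
  have h2 := pc_compl k T hT
  have h3 := pc_add S T
  rw [← h3.2]
  omega

theorem land_split (m g K M Q : ℕ) (hg : g < 2 ^ m) (hM : M < 2 ^ m) :
    (g + 2 ^ m * K) &&& (M + 2 ^ m * Q) = (g &&& M) + 2 ^ m * (K &&& Q) := by
  have h1 : (g &&& M) < 2 ^ m := Nat.and_lt_two_pow _ hM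
  have e : ∀ g K : ℕ, g < 2 ^ m → ∀ i, (g + 2 ^ m * K).testBit i = if i < m then g.testBit i else K.testBit (i - m) := by
    intro g K hg i
    rw [add_comm, Nat.testBit_two_pow_mul_add _ hg]
  apply Nat.eq_of_testBit_eq
  intro i
  rw [Nat.testBit_land, e g K hg, e M Q hM, e _ _ h1]
  split_ifs
  · rw [Nat.testBit_land]
  · rw [Nat.testBit_land]

theorem land_split_zero (m g K M Q : ℕ) (hg : g < 2 ^ m) (hM : M < 2 ^ m) :
    (g + 2 ^ m * K) &&& (M + 2 ^ m * Q) = 0 ↔ g &&& M = 0 ∧ K &&& Q = 0 := by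
  rw [land_split m g K M Q hg hM]
  simp

theorem land_block (K r t : ℕ) : K &&& ((2 ^ r - 1) * 2 ^ t) = 0 ↔ (K / 2 ^ t) % 2 ^ r = 0 := by
  have h : K = K % 2 ^ t + 2 ^ t * (K / 2 ^ t) := (Nat.mod_add_div K _).symm
  have h0 : 0 < 2 ^ t := by positivity
  conv_lhs => rw [h, show (2 ^ r - 1) * 2 ^ t = 0 + 2 ^ t * (2 ^ r - 1) by ring]
  rw [land_split_zero t _ _ _ _ (Nat.mod_lt _ h0) h0, Nat.and_two_pow_sub_one_eq_mod]
  simp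

theorem land_compl (m g D : ℕ) (hg : g < 2 ^ m) (hD : D < 2 ^ m) :
    g &&& (2 ^ m - 1 - D) = 0 ↔ g &&& D = g := by
  have e : 2 ^ m - 1 - D = 2 ^ m - (D + 1) := by omega
  rw [e]
  constructor
  · intro h
    apply Nat.eq_of_testBit_eq
    intro i
    have := congrArg (fun x => x.testBit i) h
    simp only [Nat.testBit_land, Nat.testBit_two_pow_sub_succ hD, Nat.zero_testBit] at this
    rw [Nat.testBit_land]
    by_cases hi : i < m
    · simp [hi] at this
      cases h1 : g.testBit i
      · simp
      · simp [this h1]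
    · have : g.testBit i = false := Nat.testBit_eq_false_of_lt (lt_of_lt_of_le hg (Nat.pow_le_pow_right (by norm_num) (by omega)))
      simp [this]
  · intro h
    apply Nat.eq_of_testBit_eq
    intro i
    have := congrArg (fun x => x.testBit i) h
    simp only [Nat.testBit_land] at this
    rw [Nat.testBit_land, Nat.testBit_two_pow_sub_succ hD, Nat.zero_testBit]
    cases h1 : g.testBit i
    · simp
    · rw [h1] at this; simp at this; simp [this]

theorem digits_lt (B : ℕ) (hB : 1 ≤ B) (e : ℕ → ℕ) (he : StrictMono e) (z : ℕ → ℕ) :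
    ∀ ν, (∀ i < ν, z i < B) → ∑ i ∈ Finset.range ν, z i * B ^ e i < B ^ e ν := by
  intro ν
  induction ν with
  | zero => intro _; simp; positivity
  | succ ν ih =>
    intro h
    rw [Finset.sum_range_succ]
    have h1 := ih (fun i hi => h i (by omega))
    have h2 : z ν + 1 ≤ B := h ν (by omega)
    calc _ < B ^ e ν + z ν * B ^ e ν := by omega
      _ = (z ν + 1) * B ^ e ν := by ring
      _ ≤ B * B ^ e ν := Nat.mul_le_mul_right _ h2
      _ = B ^ (e ν + 1) := by ring
      _ ≤ _ := Nat.pow_le_pow_right hB (he (Nat.lt_succ_self ν))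

theorem mask_iff (β i0 : ℕ) (hi : i0 ≤ β) (e : ℕ → ℕ) (he : StrictMono e) : ∀ ν g : ℕ,
    (g &&& ((2 ^ i0 - 1) * ∑ i ∈ Finset.range ν, (2 ^ β) ^ e i) = g ↔
      ∃ z : ℕ → ℕ, (∀ i < ν, z i < 2 ^ i0) ∧ g = ∑ i ∈ Finset.range ν, z i * (2 ^ β) ^ e i) := by
  have hb : 2 ^ i0 ≤ 2 ^ β := Nat.pow_le_pow_right (by norm_num) hi
  have hb0 : 0 < 2 ^ i0 := by positivity
  intro ν
  induction ν with
  | zero => intro g; simp [eq_comm]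
  | succ ν ih =>
    intro g
    have hD : (2 ^ i0 - 1) * ∑ i ∈ Finset.range ν, (2 ^ β) ^ e i < 2 ^ (β * e ν) := by
      rw [Finset.mul_sum, pow_mul]
      exact digits_lt (2 ^ β) (Nat.one_le_two_pow) e he (fun _ => 2 ^ i0 - 1) ν (fun i _ => by omega)
    have hpos : 0 < 2 ^ (β * e ν) := by positivity
    have hg : g = g % 2 ^ (β * e ν) + 2 ^ (β * e ν) * (g / 2 ^ (β * e ν)) := (Nat.mod_add_div _ _).symm
    have hlo := Nat.mod_lt g hpos
    rw [Finset.sum_range_succ, mul_add, ← pow_mul 2 β (e ν), mul_comm (2 ^ i0 - 1) (2 ^ (β * e ν))]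
    have key : g &&& ((2 ^ i0 - 1) * ∑ i ∈ Finset.range ν, (2 ^ β) ^ e i + 2 ^ (β * e ν) * (2 ^ i0 - 1)) = g ↔
        (g % 2 ^ (β * e ν) &&& ((2 ^ i0 - 1) * ∑ i ∈ Finset.range ν, (2 ^ β) ^ e i) = g % 2 ^ (β * e ν)) ∧
        g / 2 ^ (β * e ν) < 2 ^ i0 := by
      have h1 := land_split (β * e ν) (g % 2 ^ (β * e ν)) (g / 2 ^ (β * e ν)) _ (2 ^ i0 - 1) hlo hD
      rw [← hg] at h1
      rw [h1, Nat.and_two_pow_sub_one_eq_mod]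
      have h2 : (g % 2 ^ (β * e ν) &&& ((2 ^ i0 - 1) * ∑ i ∈ Finset.range ν, (2 ^ β) ^ e i)) < 2 ^ (β * e ν) :=
        Nat.and_lt_two_pow _ hD
      generalize (g % 2 ^ (β * e ν) &&& ((2 ^ i0 - 1) * ∑ i ∈ Finset.range ν, (2 ^ β) ^ e i)) = u at h2
      constructor
      · intro h
        have h3 : (u + 2 ^ (β * e ν) * (g / 2 ^ (β * e ν) % 2 ^ i0)) % 2 ^ (β * e ν) = u := by
          rw [Nat.add_mul_mod_self_left, Nat.mod_eq_of_lt h2]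
        have h4 : (u + 2 ^ (β * e ν) * (g / 2 ^ (β * e ν) % 2 ^ i0)) / 2 ^ (β * e ν) = g / 2 ^ (β * e ν) % 2 ^ i0 := by
          rw [Nat.add_mul_div_left _ _ hpos, Nat.div_eq_of_lt h2, zero_add]
        rw [h] at h3 h4
        exact ⟨h3.symm, by rw [h4]; exact Nat.mod_lt _ hb0⟩
      · rintro ⟨h3, h4⟩
        rw [Nat.mod_eq_of_lt h4, h3, ← hg]
    rw [key, ih]
    constructor
    · rintro ⟨⟨z, hz, hs⟩, hlt⟩
      refine ⟨fun i => if i = ν then g / 2 ^ (β * e ν) else z i, ?_, ?_⟩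
      · intro i hi
        dsimp only
        split_ifs with h
        · exact hlt
        · exact hz i (by omega)
      · rw [Finset.sum_range_succ]
        simp only [if_true]
        rw [← pow_mul]
        have : ∑ i ∈ Finset.range ν, (if i = ν then g / 2 ^ (β * e ν) else z i) * (2 ^ β) ^ e i = g % 2 ^ (β * e ν) := by
          rw [hs]
          apply Finset.sum_congr rfl
          intro i hi
          have := Finset.mem_range.1 hi
          rw [if_neg (by omega)]
        rw [this]
        linarith
    · rintro ⟨z, hz, hs⟩
      rw [Finset.sum_range_succ] at hs
      have h1 := digits_lt (2 ^ β) (Nat.one_le_two_pow) e he z ν (fun i hi => by have := hz i (by omega); omega)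
      rw [← pow_mul 2 β (e ν)] at hs h1
      have h3 : g % 2 ^ (β * e ν) = ∑ i ∈ Finset.range ν, z i * (2 ^ β) ^ e i := by
        rw [hs, Nat.add_mul_mod_self_right, Nat.mod_eq_of_lt h1]
      have h4 : g / 2 ^ (β * e ν) = z ν := by
        rw [hs, Nat.add_mul_div_right _ _ hpos, Nat.div_eq_of_lt h1, zero_add]
      exact ⟨⟨z, fun i hi => hz i (by omega), h3⟩, by rw [h4]; exact hz ν (by omega)⟩

end UP


namespace UP
open MvPolynomial

noncomputable def optS {n : ℕ} (o : Option (Fin n)) : Fin n →₀ ℕ := o.elim 0 (fun i => Finsupp.single i 1)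

noncomputable def cnt {n k : ℕ} (φ : Fin k → Option (Fin n)) : Fin n →₀ ℕ := ∑ j, optS (φ j)

def wt {n : ℕ} (s : Fin n →₀ ℕ) : ℕ := ∑ i, s i * 5 ^ (i : ℕ)

theorem cnt_exists {n : ℕ} (k : ℕ) : ∀ s : Fin n →₀ ℕ, ∑ i, s i ≤ k → ∃ φ : Fin k → Option (Fin n), cnt φ = s := by
  induction k with
  | zero =>
    intro s hs
    refine ⟨Fin.elim0, ?_⟩
    have h0 : ∀ i, s i = 0 := by
      intro i
      have : s i ≤ ∑ i, s i := Finset.single_le_sum (f := fun i => s i) (fun _ _ => Nat.zero_le _) (Finset.mem_univ i)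
      omega
    ext i; simp [cnt, h0]
  | succ k ih =>
    intro s hs
    by_cases h0 : ∃ i, s i ≠ 0
    · obtain ⟨i, hi⟩ := h0
      have hle : (Finsupp.single i 1 : Fin n →₀ ℕ) ≤ s := by
        rw [Finsupp.single_le_iff]; omega
      have hsum : s = Finsupp.single i 1 + (s - Finsupp.single i 1) := (add_tsub_cancel_of_le hle).symm
      have : ∑ j, (s - Finsupp.single i 1 : Fin n →₀ ℕ) j ≤ k := by
        have h1 : ∑ j, s j = ∑ j, (Finsupp.single i 1 : Fin n →₀ ℕ) j + ∑ j, (s - Finsupp.single i 1 : Fin n →₀ ℕ) j := by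
          rw [← Finset.sum_add_distrib]
          apply Finset.sum_congr rfl
          intro j _
          rw [← Finsupp.add_apply, ← hsum]
        have h2 : ∑ j, (Finsupp.single i 1 : Fin n →₀ ℕ) j = 1 := by
          simp [Finsupp.single_apply]
        omega
      obtain ⟨φ, hφ⟩ := ih _ this
      refine ⟨Fin.cons (some i) φ, ?_⟩
      rw [cnt, Fin.sum_univ_succ]
      simp only [Fin.cons_zero, Fin.cons_succ]
      change Finsupp.single i 1 + cnt φ = s
      rw [hφ, ← hsum]
    · push Not at h0
      refine ⟨fun _ => none, ?_⟩
      ext i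
      simp [cnt, optS, h0]

theorem cnt_le {n k : ℕ} (φ : Fin k → Option (Fin n)) (i : Fin n) : cnt φ i ≤ k := by
  rw [cnt, Finsupp.finsetSum_apply]
  calc ∑ j, optS (φ j) i ≤ ∑ j : Fin k, 1 := by
        apply Finset.sum_le_sum
        intro j _
        rcases φ j with _ | t
        · simp [optS]
        · simp only [optS, Option.elim]
          rw [Finsupp.single_apply]; split_ifs <;> omega
    _ = k := by simp

theorem wt_lt {n : ℕ} : ∀ s : Fin n → ℕ, (∀ i, s i ≤ 4) → ∑ i, s i * 5 ^ (i : ℕ) < 5 ^ n := by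
  induction n with
  | zero => intro s _; simp
  | succ n ih =>
    intro s hs
    rw [Fin.sum_univ_castSucc, pow_succ]
    have h1 := ih (fun i => s i.castSucc) (fun i => hs _)
    have h2 := hs (Fin.last n)
    simp only [Fin.val_castSucc, Fin.val_last] at h1 ⊢
    nlinarith [Nat.mul_le_mul_right (5 ^ n) h2]

theorem wt_inj {n : ℕ} : ∀ s t : Fin n → ℕ, (∀ i, s i ≤ 4) → (∀ i, t i ≤ 4) →
    ∑ i, s i * 5 ^ (i : ℕ) = ∑ i, t i * 5 ^ (i : ℕ) → s = t := by
  induction n with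
  | zero => intro s t _ _ _; ext i; exact i.elim0
  | succ n ih =>
    intro s t hs ht h
    rw [Fin.sum_univ_succ, Fin.sum_univ_succ] at h
    have e : ∀ s : Fin (n + 1) → ℕ, ∑ i : Fin n, s i.succ * 5 ^ ((i.succ : Fin (n + 1)) : ℕ) = 5 * ∑ i : Fin n, s i.succ * 5 ^ (i : ℕ) := by
      intro s
      rw [Finset.mul_sum]
      apply Finset.sum_congr rfl
      intro i _
      rw [Fin.val_succ, pow_succ]; ring
    rw [e, e] at h
    have h0 := hs 0
    have h1 := ht 0
    simp only [Fin.val_zero, pow_zero, mul_one] at h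
    have h2 := ih (fun i => s i.succ) (fun i => t i.succ) (fun i => hs _) (fun i => ht _) (by omega)
    funext i
    refine Fin.cases ?_ ?_ i
    · omega
    · intro i; exact congrFun h2 i

def optW {n : ℕ} (o : Option (Fin n)) : ℕ := o.elim 0 (fun i => 5 ^ (i : ℕ))
def optX {n : ℕ} (x : Fin n → ℕ) (o : Option (Fin n)) : ℤ := o.elim 1 (fun i => (x i : ℤ))

theorem wt_cnt {n k : ℕ} (φ : Fin k → Option (Fin n)) : wt (cnt φ) = ∑ j, optW (φ j) := by
  unfold wt cnt
  simp only [Finsupp.finsetSum_apply, Finset.sum_mul]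
  rw [Finset.sum_comm]
  apply Finset.sum_congr rfl
  intro j _
  rcases φ j with _ | t
  · simp [optS, optW]
  · simp only [optS, optW, Option.elim, Finsupp.single_apply, ite_mul, one_mul, zero_mul]
    simp

theorem prod_cnt {n k : ℕ} (x : Fin n → ℕ) (φ : Fin k → Option (Fin n)) :
    ∏ j, optX x (φ j) = ∏ i, (x i : ℤ) ^ (cnt φ i) := by
  unfold cnt
  simp only [Finsupp.finsetSum_apply]
  simp_rw [← Finset.prod_pow_eq_pow_sum]
  rw [Finset.prod_comm]
  apply Finset.prod_congr rfl
  intro j _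
  rcases φ j with _ | t
  · simp [optS, optX]
  · simp only [optS, optX, Option.elim, Finsupp.single_apply, pow_ite, pow_one, pow_zero]
    simp

abbrev Phi (n : ℕ) := Fin 4 → Option (Fin n)

open Classical in
noncomputable def nS {n : ℕ} (s : Fin n →₀ ℕ) : ℕ := (Finset.univ.filter (fun φ : Phi n => cnt φ = s)).card

noncomputable def M0 (n : ℕ) : ℕ := (Fintype.card (Phi n)).factorial

noncomputable def cf {n : ℕ} (P : MvPolynomial (Fin n) ℤ) (s : Fin n →₀ ℕ) : ℤ := P.coeff s * ((M0 n / nS s : ℕ) : ℤ)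

noncomputable def Lam {n : ℕ} (P : MvPolynomial (Fin n) ℤ) : ℕ :=
  Fintype.card (Phi n) * ∑ s ∈ P.support, (cf P s).natAbs

theorem nS_dvd {n : ℕ} (s : Fin n →₀ ℕ) (hs : ∑ i, s i ≤ 4) : nS s ∣ M0 n := by
  classical
  obtain ⟨φ, hφ⟩ := cnt_exists 4 s hs
  apply Nat.dvd_factorial
  · rw [nS, Finset.card_pos]
    exact ⟨φ, by simp [hφ]⟩
  · exact Finset.card_le_univ _

theorem support_deg {n : ℕ} (P : MvPolynomial (Fin n) ℤ) (hP : P.totalDegree ≤ 4) (s : Fin n →₀ ℕ)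
    (hs : s ∈ P.support) : ∑ i, s i ≤ 4 := by
  have h := (MvPolynomial.le_totalDegree hs).trans hP
  rwa [Finsupp.sum_fintype _ _ (fun _ => rfl)] at h

theorem le_of_sum {n : ℕ} (s : Fin n →₀ ℕ) (hs : ∑ i, s i ≤ 4) (i : Fin n) : s i ≤ 4 :=
  le_trans (Finset.single_le_sum (f := fun i => s i) (fun _ _ => Nat.zero_le _) (Finset.mem_univ i)) hs

/-- the coefficient polynomial, evaluated at `B` -/
noncomputable def Dv {R : Type*} [CommRing R] {n : ℕ} (P : MvPolynomial (Fin n) ℤ) (B : R) : R :=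
  ∑ s ∈ P.support, ((cf P s : ℤ) : R) * B ^ (5 ^ n - wt s)

open Classical in
noncomputable def qc {n : ℕ} (P : MvPolynomial (Fin n) ℤ) (x : Fin n → ℕ) (i : ℕ) : ℤ :=
  ∑ t ∈ ((Finset.univ : Finset (Phi n)) ×ˢ P.support) with wt (cnt t.1) + (5 ^ n - wt t.2) = i,
    cf P t.2 * ∏ j, optX x (t.1 j)

theorem wt_cnt_lt {n : ℕ} (φ : Phi n) : wt (cnt φ) < 5 ^ n := wt_lt _ (cnt_le φ)

theorem expand {n : ℕ} (P : MvPolynomial (Fin n) ℤ) (x : Fin n → ℕ) (B : ℤ) (E : ℕ) (hE : 2 * 5 ^ n ≤ E) :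
    (1 + ∑ i, (x i : ℤ) * B ^ (5 ^ (i : ℕ))) ^ 4 * Dv P B = ∑ i ∈ Finset.range E, qc P x i * B ^ i := by
  classical
  have h1 : (1 + ∑ i, (x i : ℤ) * B ^ (5 ^ (i : ℕ))) = ∑ o : Option (Fin n), optX x o * B ^ optW o := by
    rw [Fintype.sum_option]; simp [optX, optW]
  have h2 : (1 + ∑ i, (x i : ℤ) * B ^ (5 ^ (i : ℕ))) ^ 4 =
      ∑ φ : Phi n, (∏ j, optX x (φ j)) * B ^ wt (cnt φ) := by
    rw [h1, Fintype.sum_pow]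
    apply Finset.sum_congr rfl
    intro φ _
    rw [Finset.prod_mul_distrib, Finset.prod_pow_eq_pow_sum, wt_cnt]
  rw [h2, Dv, Finset.sum_mul_sum, ← Finset.sum_product']
  rw [← Finset.sum_fiberwise_of_maps_to (s := (Finset.univ : Finset (Phi n)) ×ˢ P.support)
    (t := Finset.range E) (g := fun t => wt (cnt t.1) + (5 ^ n - wt t.2))]
  · apply Finset.sum_congr rfl
    intro i _
    rw [qc, Finset.sum_mul]
    apply Finset.sum_congr rfl
    intro t ht
    rw [← (Finset.mem_filter.1 ht).2, pow_add]
    push_cast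
    ring
  · intro t _
    have := wt_cnt_lt t.1
    rw [Finset.mem_range]
    omega

theorem qc_main {n : ℕ} (P : MvPolynomial (Fin n) ℤ) (hP : P.totalDegree ≤ 4) (x : Fin n → ℕ) :
    qc P x (5 ^ n) = M0 n * MvPolynomial.eval (fun i => (x i : ℤ)) P := by
  classical
  rw [qc, Finset.sum_filter, Finset.sum_product_right, MvPolynomial.eval_eq', Finset.mul_sum]
  apply Finset.sum_congr rfl
  intro s hs
  have hs4 := support_deg P hP s hs
  have hws : wt s < 5 ^ n := wt_lt _ (le_of_sum s hs4)
  have h1 : ∀ φ : Phi n, (wt (cnt φ) + (5 ^ n - wt s) = 5 ^ n) ↔ cnt φ = s := by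
    intro φ
    constructor
    · intro h
      have h2 : wt (cnt φ) = wt s := by omega
      have := wt_inj _ _ (cnt_le φ) (le_of_sum s hs4) h2
      exact DFunLike.coe_injective this
    · intro h; rw [h]; omega
  simp only [h1]
  rw [← Finset.sum_filter]
  have h3 : ∀ φ ∈ Finset.univ.filter (fun φ : Phi n => cnt φ = s),
      cf P s * ∏ j, optX x (φ j) = cf P s * ∏ i, (x i : ℤ) ^ (s i) := by
    intro φ hφ
    rw [prod_cnt, (Finset.mem_filter.1 hφ).2]
  rw [Finset.sum_congr rfl h3, Finset.sum_const, nsmul_eq_mul]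
  have h4 : ((nS s : ℕ) : ℤ) * ((M0 n / nS s : ℕ) : ℤ) = M0 n := by
    exact_mod_cast Nat.mul_div_cancel' (nS_dvd s hs4)
  change ((nS s : ℕ) : ℤ) * (cf P s * ∏ i, (x i : ℤ) ^ (s i)) = _
  rw [cf, ← h4]; ring

theorem qc_bound {n : ℕ} (P : MvPolynomial (Fin n) ℤ) (x : Fin n → ℕ) (b : ℕ) (hb : 1 ≤ b) (hx : ∀ i, x i ≤ b) (i : ℕ) :
    |qc P x i| ≤ Lam P * b ^ 4 := by
  classical
  rw [qc]
  refine (Finset.abs_sum_le_sum_abs _ _).trans ?_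
  have h1 : ∀ t : Phi n × (Fin n →₀ ℕ), |cf P t.2 * ∏ j, optX x (t.1 j)| ≤ (cf P t.2).natAbs * (b : ℤ) ^ 4 := by
    intro t
    rw [abs_mul, Int.abs_eq_natAbs]
    apply mul_le_mul_of_nonneg_left _ (by positivity)
    rw [Finset.abs_prod]
    calc ∏ j, |optX x (t.1 j)| ≤ ∏ j : Fin 4, (b : ℤ) := by
          apply Finset.prod_le_prod (fun _ _ => abs_nonneg _)
          intro j _
          rcases t.1 j with _ | u
          · simp only [optX, Option.elim]; rw [abs_one]; exact_mod_cast hb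
          · simp only [optX, Option.elim]; rw [abs_of_nonneg (by positivity)]; exact_mod_cast hx u
      _ = _ := by simp
  refine (Finset.sum_le_sum (fun t _ => h1 t)).trans ?_
  refine (Finset.sum_le_sum_of_subset_of_nonneg (Finset.filter_subset _ _) (fun t _ _ => by positivity)).trans ?_
  rw [Finset.sum_product, Lam]
  simp only [Finset.sum_const, nsmul_eq_mul, ← Finset.sum_mul]
  push_cast
  rw [Finset.card_univ]
  apply le_of_eq; ring

theorem digit_ext (B H : ℤ) (hH : 0 < H) (hB : B = 2 * H) (q : ℕ → ℤ) (hq : ∀ i, |q i| < H) (L E : ℕ) (hLE : L < E) :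
    ((∑ i ∈ Finset.range E, q i * B ^ i + H * ∑ i ∈ Finset.range E, B ^ i) / B ^ L) % H = 0 ↔ q L = 0 := by
  have hB0 : 0 < B := by linarith
  have e : ∑ i ∈ Finset.range E, q i * B ^ i + H * ∑ i ∈ Finset.range E, B ^ i =
      ∑ i ∈ Finset.range E, (q i + H) * B ^ i := by
    rw [Finset.mul_sum, ← Finset.sum_add_distrib]
    apply Finset.sum_congr rfl; intro i _; ring
  have hd : ∀ i, 0 < q i + H ∧ q i + H < B := by
    intro i; have := abs_lt.1 (hq i); constructor <;> linarith
  have hlo : ∀ L, 0 ≤ ∑ i ∈ Finset.range L, (q i + H) * B ^ i ∧ ∑ i ∈ Finset.range L, (q i + H) * B ^ i < B ^ L := by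
    intro L
    induction L with
    | zero => simp
    | succ L ih =>
      rw [Finset.sum_range_succ, pow_succ]
      have h1 := (hd L).1
      have h2 : q L + H + 1 ≤ B := (hd L).2
      have h3 : 0 < B ^ L := by positivity
      have h4 := mul_le_mul_of_nonneg_right h2 h3.le
      have h5 := mul_pos h1 h3
      constructor <;> linarith [ih.1, ih.2]
  obtain ⟨m, rfl⟩ : ∃ m, E = L + (m + 1) := ⟨E - L - 1, by omega⟩
  rw [e, Finset.sum_range_add, Finset.sum_range_succ']
  have e2 : ∑ k ∈ Finset.range m, (q (L + (k + 1)) + H) * B ^ (L + (k + 1)) =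
      B ^ L * (H * (2 * ∑ k ∈ Finset.range m, (q (L + (k + 1)) + H) * B ^ k)) := by
    rw [← mul_assoc, Finset.mul_sum, Finset.mul_sum]
    apply Finset.sum_congr rfl
    intro k _
    rw [show L + (k + 1) = L + k + 1 by ring, pow_succ, pow_add]
    nth_rewrite 3 [hB]
    ring
  rw [e2, add_zero]
  have e3 : ∀ S lo : ℤ, lo + (B ^ L * (H * S) + (q L + H) * B ^ L) = lo + B ^ L * (q L + H * (S + 1)) := by
    intro S lo; ring
  rw [e3, Int.add_mul_ediv_left _ _ (by positivity), Int.ediv_eq_zero_of_lt (hlo L).1 (hlo L).2, zero_add,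
    Int.add_mul_emod_self_left]
  constructor
  · intro h
    exact Int.eq_zero_of_abs_lt_dvd (Int.dvd_of_emod_eq_zero h) (hq L)
  · intro h; rw [h]; simp

theorem code_digit {n : ℕ} (P : MvPolynomial (Fin n) ℤ) (hP : P.totalDegree ≤ 4) (x : Fin n → ℕ) (b : ℕ)
    (hb : 1 ≤ b) (hx : ∀ i, x i ≤ b) (B H : ℤ) (hH : Lam P * (b : ℤ) ^ 4 < H) (hB : B = 2 * H) :
    (((1 + ∑ i, (x i : ℤ) * B ^ (5 ^ (i : ℕ))) ^ 4 * Dv P B + H * ∑ i ∈ Finset.range (5 * 5 ^ n + 1), B ^ i) / B ^ (5 ^ n)) % H = 0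
      ↔ MvPolynomial.eval (fun i => (x i : ℤ)) P = 0 := by
  have hH0 : 0 < H := lt_of_le_of_lt (by positivity) hH
  rw [expand P x B (5 * 5 ^ n + 1) (by omega), digit_ext B H hH0 hB _
    (fun i => lt_of_le_of_lt (qc_bound P x b hb hx i) hH) (5 ^ n) _ (by omega), qc_main P hP]
  have hM : M0 n ≠ 0 := Nat.factorial_ne_zero _
  simp [hM]

theorem Dv_bound {n : ℕ} (P : MvPolynomial (Fin n) ℤ) (B : ℤ) (hB : 1 ≤ B) : |Dv P B| ≤ Lam P * B ^ (5 ^ n) := by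
  rw [Dv]
  refine (Finset.abs_sum_le_sum_abs _ _).trans ?_
  have hc : 1 ≤ Fintype.card (Phi n) := Fintype.card_pos
  calc ∑ s ∈ P.support, |((cf P s : ℤ) : ℤ) * B ^ (5 ^ n - wt s)|
      ≤ ∑ s ∈ P.support, ((cf P s).natAbs : ℤ) * B ^ (5 ^ n) := by
        apply Finset.sum_le_sum
        intro s _
        rw [abs_mul, abs_of_nonneg (show 0 ≤ B ^ (5 ^ n - wt s) by positivity), Int.abs_eq_natAbs]
        apply mul_le_mul_of_nonneg_left _ (by positivity)
        exact pow_le_pow_right₀ hB (Nat.sub_le _ _)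
    _ = (∑ s ∈ P.support, (cf P s).natAbs : ℕ) * B ^ (5 ^ n) := by rw [← Finset.sum_mul]; push_cast; rfl
    _ ≤ _ := by
        apply mul_le_mul_of_nonneg_right _ (by positivity)
        rw [Lam]
        exact_mod_cast Nat.le_mul_of_pos_left _ hc

end UP


namespace UP
open MvPolynomial

theorem nat_iff (ν m i r L k g K D S T : ℕ) (him : i ≤ m) (hg : g < 2 ^ (m * L))
    (hDd : D = (2 ^ i - 1) * ∑ j ∈ Finset.range ν, (2 ^ m) ^ (5 ^ (j + 1))) (hD : D < 2 ^ (m * L))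
    (hSd : S = g + 2 ^ (m * L) * K) (hTd : T = (2 ^ (m * L) - 1 - D) + 2 ^ (m * L) * ((2 ^ r - 1) * 2 ^ (m * L)))
    (hS : S < 2 ^ k) (hT : T < 2 ^ k) :
    (2 ^ k) ^ 2 ∣ Nat.centralBinom ((2 ^ k - 1) * ((S + T + 1) * 2 ^ k + T + 1)) ↔
      (∃ z : ℕ → ℕ, (∀ j < ν, z j < 2 ^ i) ∧ g = ∑ j ∈ Finset.range ν, z j * (2 ^ m) ^ (5 ^ (j + 1))) ∧
        (K / 2 ^ (m * L)) % 2 ^ r = 0 := by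
  have he : StrictMono (fun j : ℕ => 5 ^ (j + 1)) := by
    intro x y hxy
    exact Nat.pow_lt_pow_right (by norm_num) (by omega)
  rw [central_iff k S T hS hT, hSd, hTd, land_split_zero (m * L) g K _ _ hg (by omega), land_block,
    land_compl (m * L) g D hg hD, hDd, mask_iff m i him (fun j : ℕ => 5 ^ (j + 1)) he]

section defs
variable {R : Type*} [CommRing R]
def zH (β : ℕ) (b : R) : R := (β : R) * b ^ 4
def zB (β : ℕ) (b : R) : R := 2 * zH β b
def zMu (ν β : ℕ) (b : R) : R := zB β b ^ (5 ^ (ν + 1))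
def zM (ν β : ℕ) (b : R) : R :=
  zMu ν β b - 1 - (b - 1) * ∑ j ∈ Finset.range ν, zB β b ^ (5 ^ (j + 1))
noncomputable def zK {ν : ℕ} (P : MvPolynomial (Fin (ν + 1)) ℤ) (β : ℕ) (b a g : R) : R :=
  (1 + a * zB β b + g) ^ 4 * Dv P (zB β b)
    + zH β b * ∑ j ∈ Finset.range (5 * 5 ^ (ν + 1) + 1), zB β b ^ j
noncomputable def zS {ν : ℕ} (P : MvPolynomial (Fin (ν + 1)) ℤ) (β : ℕ) (b a g : R) : R :=
  g + zMu ν β b * zK P β b a g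
def zT (ν β : ℕ) (b : R) : R := zM ν β b + zMu ν β b * ((zH β b - 1) * zMu ν β b)
def zN (ν β : ℕ) (b : R) : R := zB β b ^ (6 * 5 ^ (ν + 1) + 2)
noncomputable def zX {ν : ℕ} (P : MvPolynomial (Fin (ν + 1)) ℤ) (β : ℕ) (b a g : R) : R :=
  (zN ν β b - 1) * ((zS P β b a g + zT ν β b + 1) * zN ν β b + zT ν β b + 1)
def zY (ν β : ℕ) (b : R) : R := zN ν β b ^ 2
end defs

theorem K_bounds_aux (B H Λ a b g D : ℤ) (L : ℕ) (hL : 2 ≤ L) (hB : B = 2 * H) (hΛ : 0 ≤ Λ) (hH : 16 * Λ < H)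
    (ha : 0 ≤ a) (hab : a < b) (hbH : b ≤ H) (hg0 : 0 ≤ g) (hg : g < B ^ L) (hD : |D| ≤ Λ * B ^ L) :
    0 < (1 + a * B + g) ^ 4 * D + H * ∑ j ∈ Finset.range (5 * L + 1), B ^ j ∧
      (1 + a * B + g) ^ 4 * D + H * ∑ j ∈ Finset.range (5 * L + 1), B ^ j < B ^ (5 * L + 2) := by
  have hH1 : 1 ≤ H := by omega
  have hB2 : 2 ≤ B := by omega
  have hBL : B ^ 2 ≤ B ^ L := pow_le_pow_right₀ (by omega) hL
  have hc0 : 0 ≤ 1 + a * B + g := by positivity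
  have hc : 1 + a * B + g ≤ 2 * B ^ L := by nlinarith
  have hc4 : (1 + a * B + g) ^ 4 ≤ 16 * B ^ (4 * L) := by
    calc (1 + a * B + g) ^ 4 ≤ (2 * B ^ L) ^ 4 := pow_le_pow_left₀ hc0 hc 4
      _ = 16 * B ^ (4 * L) := by rw [mul_pow, ← pow_mul, mul_comm L 4]; norm_num
  have habs : |(1 + a * B + g) ^ 4 * D| ≤ 16 * Λ * B ^ (5 * L) := by
    rw [abs_mul, abs_of_nonneg (by positivity)]
    calc (1 + a * B + g) ^ 4 * |D| ≤ (16 * B ^ (4 * L)) * (Λ * B ^ L) :=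
          mul_le_mul hc4 hD (abs_nonneg _) (by positivity)
      _ = 16 * Λ * B ^ (5 * L) := by rw [show 5 * L = 4 * L + L by ring, pow_add]; ring
  have hp : 0 < B ^ (5 * L) := by positivity
  have hlt : 16 * Λ * B ^ (5 * L) < H * B ^ (5 * L) := mul_lt_mul_of_pos_right hH hp
  have h1 := abs_le.1 habs
  have hs0 : 0 ≤ ∑ j ∈ Finset.range (5 * L), B ^ j := Finset.sum_nonneg (fun _ _ => by positivity)
  have hgeo := mul_geom_sum B (5 * L + 1)
  rw [Finset.sum_range_succ] at hgeo ⊢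
  set s := ∑ j ∈ Finset.range (5 * L), B ^ j
  rw [pow_succ] at hgeo
  have e2 : B ^ (5 * L + 2) = B ^ (5 * L) * B * B := by rw [pow_add]; ring
  rw [e2]
  generalize B ^ (5 * L) = p at *
  have hsp : s + p ≤ p * B := by nlinarith
  have hHs : 0 ≤ H * s := by positivity
  constructor
  · linarith [h1.1, mul_add H s p]
  · have h3 : H * (s + p) ≤ H * (p * B) := mul_le_mul_of_nonneg_left hsp (by omega)
    have h4 : H * p + H * (p * B) ≤ p * B * B := by
      subst hB
      nlinarith [mul_pos hp (show 0 < H by omega)]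
    linarith [h1.2]

theorem K_bounds {ν : ℕ} (P : MvPolynomial (Fin (ν + 1)) ℤ) (β : ℕ) (hβ : 16 * Lam P < β)
    (b a g : ℤ) (ha : 0 ≤ a) (hab : a < b) (hg0 : 0 ≤ g) (hg : g < zMu ν β b) :
    0 < zK P β b a g ∧ zK P β b a g < zB β b ^ (5 * 5 ^ (ν + 1) + 2) := by
  have hL : 2 ≤ 5 ^ (ν + 1) := by
    calc 2 ≤ 5 ^ 1 := by norm_num
      _ ≤ 5 ^ (ν + 1) := Nat.pow_le_pow_right (by norm_num) (by omega)
  have hb1 : 1 ≤ b := by omega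
  have hb4 : b ≤ b ^ 4 := le_self_pow₀ hb1 (by norm_num)
  have hβ1 : (16 * Lam P : ℤ) + 1 ≤ β := by exact_mod_cast hβ
  have hLam : (0:ℤ) ≤ Lam P := by positivity
  have hHβ : (β : ℤ) ≤ zH β b := by
    rw [zH]; nlinarith
  have hHb : b ≤ zH β b := by
    rw [zH]; nlinarith
  have hBH : zB β b = 2 * zH β b := rfl
  rw [zMu] at hg
  unfold zK
  have hL1 : 1 ≤ zB β b := by omega
  exact K_bounds_aux _ _ (Lam P) a b g _ _ hL hBH hLam (by omega) ha hab hHb hg0 hg (Dv_bound P _ hL1)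

theorem code_core {ν : ℕ} (P : MvPolynomial (Fin (ν + 1)) ℤ) (hP : P.totalDegree ≤ 4) (e : ℕ)
    (hβ : 16 * Lam P < 2 ^ e) (a b g : ℕ) (hab : a < b) (hg : (g : ℤ) < zMu ν (2 ^ e) (b : ℤ)) :
    ∃ X Y μ : ℕ, (X : ℤ) = zX P (2 ^ e) (b : ℤ) a g ∧ (Y : ℤ) = zY ν (2 ^ e) (b : ℤ) ∧
      (μ : ℤ) = zMu ν (2 ^ e) (b : ℤ) ∧ 1 ≤ X ∧ 1 ≤ Y ∧ b ≤ μ ∧ b ≤ X ∧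
      ((∃ i, b = 2 ^ i) → (Y ∣ Nat.centralBinom X ↔ ∃ z : ℕ → ℕ, (∀ j < ν, z j < b) ∧
        (g : ℤ) = ∑ j ∈ Finset.range ν, (z j : ℤ) * zB (2 ^ e) (b : ℤ) ^ (5 ^ (j + 1)) ∧
        MvPolynomial.eval (Fin.cons (a : ℤ) (fun i : Fin ν => (z i : ℤ))) P = 0)) := by
  have hL : 2 ≤ 5 ^ (ν + 1) := by
    calc 2 ≤ 5 ^ 1 := by norm_num
      _ ≤ 5 ^ (ν + 1) := Nat.pow_le_pow_right (by norm_num) (by omega)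
  obtain ⟨hK0, hK1⟩ := K_bounds P (2 ^ e) hβ (b : ℤ) a g (by positivity) (by exact_mod_cast hab) (by positivity) hg
  obtain ⟨K, hK⟩ := Int.eq_ofNat_of_zero_le hK0.le
  -- natural number versions
  set H : ℕ := 2 ^ e * b ^ 4 with hH
  set B : ℕ := 2 * H with hB
  set L : ℕ := 5 ^ (ν + 1) with hLd
  have hb1 : 1 ≤ b := by omega
  have hHb : b ≤ H := by
    calc b ≤ b ^ 4 := Nat.le_self_pow (by norm_num) b
      _ ≤ H := Nat.le_mul_of_pos_left _ (by positivity)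
  have hH1 : 1 ≤ H := by omega
  have hzH : zH (2 ^ e) (b : ℤ) = (H : ℤ) := by rw [zH, hH]; push_cast; ring
  have hzB : zB (2 ^ e) (b : ℤ) = (B : ℤ) := by rw [zB, hzH, hB]; push_cast; ring
  have hzMu : zMu ν (2 ^ e) (b : ℤ) = ((B ^ L : ℕ) : ℤ) := by rw [zMu, hzB]; push_cast; rfl
  have he : StrictMono (fun j : ℕ => 5 ^ (j + 1)) := by
    intro x y hxy
    exact Nat.pow_lt_pow_right (by norm_num) (by omega)
  set D : ℕ := (b - 1) * ∑ j ∈ Finset.range ν, B ^ (5 ^ (j + 1)) with hDd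
  have hD : D < B ^ L := by
    have := digits_lt B (by omega) (fun j : ℕ => 5 ^ (j + 1)) he (fun _ => b - 1) ν (fun _ _ => by omega)
    rw [← Finset.mul_sum] at this
    exact this
  have hzM : zM ν (2 ^ e) (b : ℤ) = ((B ^ L - 1 - D : ℕ) : ℤ) := by
    rw [zM, hzMu, hzB, Nat.sub_sub, Nat.cast_sub (by omega), hDd]
    push_cast [Nat.cast_sub hb1]
    ring
  set S : ℕ := g + B ^ L * K with hSd
  set T : ℕ := (B ^ L - 1 - D) + B ^ L * ((H - 1) * B ^ L) with hTd
  set N : ℕ := B ^ (6 * L + 2) with hNd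
  have hzS : zS P (2 ^ e) (b : ℤ) a g = (S : ℤ) := by
    rw [zS, hzMu, hK, hSd]; push_cast; ring
  have hzT : zT ν (2 ^ e) (b : ℤ) = (T : ℤ) := by
    rw [zT, hzMu, hzM, hTd, hzH]; push_cast [Nat.cast_sub hH1]; ring
  have hzN : zN ν (2 ^ e) (b : ℤ) = (N : ℤ) := by
    rw [zN, hzB, hNd]; push_cast; ring
  have hB2 : 2 ≤ B := by omega
  have hN0 : N = B ^ L * B ^ (5 * L + 2) := by rw [hNd, ← pow_add]; congr 1; ring
  have hbL : B ≤ B ^ L := Nat.le_self_pow (by omega) B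
  have hBN : B ^ 2 ≤ N := Nat.pow_le_pow_right (by omega) (by omega)
  have hbN : b + 1 ≤ N := by nlinarith
  have hKB : K < B ^ (5 * L + 2) := by
    rw [hzB, hK] at hK1; exact_mod_cast hK1
  have hgB : g < B ^ L := by rw [hzMu] at hg; exact_mod_cast hg
  have hS : S < N := by
    rw [hN0]
    calc S < B ^ L * (K + 1) := by rw [hSd]; ring_nf; omega
      _ ≤ _ := Nat.mul_le_mul_left _ hKB
  have hT : T < N := by
    rw [hN0]
    have h1 : (H - 1) * B ^ L + 1 ≤ B ^ (5 * L + 2) := by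
      have h2 : B ^ (1 + L) ≤ B ^ (5 * L + 2) := Nat.pow_le_pow_right (by omega) (by omega)
      rw [pow_add, pow_one] at h2
      have h3 : (H - 1) * B ^ L + B ^ L ≤ B * B ^ L := by
        rw [← Nat.succ_mul]; exact Nat.mul_le_mul_right _ (by omega)
      omega
    calc T < B ^ L * ((H - 1) * B ^ L + 1) := by rw [hTd, mul_add, mul_one]; omega
      _ ≤ _ := Nat.mul_le_mul_left _ h1
  refine ⟨(N - 1) * ((S + T + 1) * N + T + 1), N ^ 2, B ^ L, ?_, ?_, hzMu.symm, ?_, ?_, ?_, ?_, ?_⟩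
  · rw [zX, hzS, hzT, hzN]; push_cast [Nat.cast_sub (show 1 ≤ N by omega)]; ring
  · rw [zY, hzN]; push_cast; ring
  · exact Nat.mul_pos (by omega) (by omega)
  · exact Nat.pow_pos (by omega)
  · omega
  · calc b ≤ N - 1 := by omega
      _ ≤ _ := Nat.le_mul_of_pos_right _ (by omega)
  rintro ⟨i, hbi⟩
  have hHp : H = 2 ^ (e + 4 * i) := by rw [hH, hbi, pow_add, pow_mul']
  have hBp : B = 2 ^ (e + 4 * i + 1) := by rw [hB, hHp, pow_succ]; ring
  have hBLp : B ^ L = 2 ^ ((e + 4 * i + 1) * L) := by rw [hBp, ← pow_mul]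
  have hNp : N = 2 ^ ((e + 4 * i + 1) * (6 * L + 2)) := by rw [hNd, hBp, ← pow_mul]
  have key := nat_iff ν (e + 4 * i + 1) i (e + 4 * i) L ((e + 4 * i + 1) * (6 * L + 2)) g K D S T (by omega)
    (by rw [← hBLp]; exact hgB) (by rw [← hBp, ← hbi]) (by rw [← hBLp]; exact hD) (by rw [← hBLp])
    (by rw [← hBLp, ← hHp]) (by rw [← hNp]; exact hS) (by rw [← hNp]; exact hT)
  rw [← hNp, ← hBp, ← hBLp, ← hHp, ← hbi] at key
  rw [key]
  have step : ∀ z : ℕ → ℕ, (∀ j < ν, z j < b) → g = ∑ j ∈ Finset.range ν, z j * B ^ (5 ^ (j + 1)) →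
      ((K / B ^ L) % H = 0 ↔ MvPolynomial.eval (Fin.cons (a : ℤ) (fun i : Fin ν => (z i : ℤ))) P = 0) := by
    intro z hz hgz
    let x : Fin (ν + 1) → ℕ := Fin.cons a (fun i : Fin ν => z i)
    have hx : ∀ i, x i ≤ b := by
      intro i
      refine Fin.cases ?_ ?_ i
      · exact hab.le
      · intro j; exact (hz j j.2).le
    have hxe : (fun i => (x i : ℤ)) = Fin.cons (a : ℤ) (fun i : Fin ν => (z i : ℤ)) := by
      funext i
      refine Fin.cases ?_ ?_ i
      · rfl
      · intro j; rfl
    have hLamH : (Lam P : ℤ) * (b : ℤ) ^ 4 < (H : ℤ) := by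
      rw [hH]
      push_cast
      apply mul_lt_mul_of_pos_right _ (by positivity)
      have : Lam P < 2 ^ e := by omega
      exact_mod_cast this
    have hc := code_digit P hP x b hb1 hx (B : ℤ) (H : ℤ) hLamH (by rw [hB]; push_cast; ring)
    have hsum : (1 + ∑ i, (x i : ℤ) * (B : ℤ) ^ (5 ^ (i : ℕ))) = 1 + a * B + g := by
      rw [Fin.sum_univ_succ, hgz, Finset.sum_range]
      push_cast
      simp [x, add_assoc]
    rw [hsum, hxe] at hc
    rw [← hc]
    rw [zK, hzB, hzH] at hK
    rw [hK]
    norm_cast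
  constructor
  · rintro ⟨⟨z, hz, hgz⟩, hk⟩
    refine ⟨z, hz, ?_, (step z hz hgz).1 hk⟩
    rw [hzB, hgz]; push_cast; rfl
  · rintro ⟨z, hz, hgz, hk⟩
    rw [hzB] at hgz
    have hgz' : g = ∑ j ∈ Finset.range ν, z j * B ^ (5 ^ (j + 1)) := by exact_mod_cast hgz
    exact ⟨⟨z, hz, hgz'⟩, (step z hz hgz').2 hk⟩

end UP


namespace UP
open MvPolynomial

section defs
variable {R : Type*} [CommRing R]
def zc (a f : R) : R := (2 * a + 3) * f + (a + 2)

noncomputable def qq {ν : ℕ} (P : MvPolynomial (Fin (ν + 1)) ℤ) (β : ℕ) (b a g h k l w x y n : R) : R :=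
  rM (cA1 (zX P β b a g) (zY ν β b) (zMu ν β b) l w h x y)
    (cA2 (zX P β b a g) (zY ν β b) (zMu ν β b) l w k)
    (cS (zX P β b a g) (zY ν β b) (zMu ν β b) l w)
    (cT (zX P β b a g) (zY ν β b) (zMu ν β b) b l w h)
    (cR (zX P β b a g) (zY ν β b) (zMu ν β b) g l w h k x) n

noncomputable def QQ {ν : ℕ} (P : MvPolynomial (Fin (ν + 1)) ℤ) (β : ℕ) (a f g h k l w x y u v t : R) : R :=
  qq P β (zc a f ^ 2) a g h k l w x y (u ^ 2 + u + v ^ 2 + v + t ^ 2)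
end defs

theorem cS_ne (X Y μ l w : ℤ) : cS X Y μ l w ≠ 0 := by
  rw [cS]; omega

theorem cR_range (X Y μ g l w h k x : ℤ) (hμ : 0 < μ) (hR : 0 < cR X Y μ g l w h k x) : 0 ≤ g ∧ g < μ := by
  rw [cR] at hR
  have h0 : 0 ≤ x ^ 2 * l ^ 2 := by positivity
  have h1 := pos_of_mul_pos_right hR h0
  set J := bJ X Y μ l w k
  set C := bC X Y μ l w h - l * Y * J
  have h2 : 0 < J ^ 2 * (μ ^ 2 - (2 * g + 1 - μ) ^ 2) := by
    have : 0 ≤ 16 * μ ^ 2 * C ^ 2 := by positivity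
    nlinarith
  have h3 := pos_of_mul_pos_right h2 (by positivity)
  have h4 : (2 * g + 1 - μ) ^ 2 < μ ^ 2 := by linarith
  have h5 := abs_lt_of_sq_lt_sq h4 hμ.le
  rw [abs_lt] at h5
  constructor <;> omega

theorem zc_sq_gt (a : ℕ) (f : ℤ) : (a : ℤ) < zc (a : ℤ) f ^ 2 := by
  rw [zc]
  rcases le_or_gt 0 f with hf | hf
  · nlinarith [mul_nonneg (show (0:ℤ) ≤ 2 * a + 3 by positivity) hf]
  · have : (2 * (a:ℤ) + 3) * f ≤ -(2 * (a:ℤ) + 3) := by nlinarith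
    nlinarith

theorem zMu_pos (ν β b : ℕ) (hβ : 0 < β) (hb : 0 < b) : 0 < zMu ν β (b : ℤ) := by
  rw [zMu, zB, zH]; positivity

theorem sem_back {ν : ℕ} (P : MvPolynomial (Fin (ν + 1)) ℤ) (hP : P.totalDegree ≤ 4) (e : ℕ)
    (hβ : 16 * Lam P < 2 ^ e) (a : ℕ) (f g h k l w x y u v t : ℤ)
    (hQ : QQ P (2 ^ e) (a : ℤ) f g h k l w x y u v t = 0) :
    ∃ z : Fin ν → ℕ, MvPolynomial.eval (Fin.cons (a : ℤ) (fun i => (z i : ℤ))) P = 0 := by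
  rw [QQ] at hQ
  have hab := zc_sq_gt a f
  obtain ⟨b, hb⟩ := Int.eq_ofNat_of_zero_le (sq_nonneg (zc (a : ℤ) f))
  have hn : 0 ≤ u ^ 2 + u + v ^ 2 + v + t ^ 2 := by
    have : ∀ u : ℤ, 0 ≤ u ^ 2 + u := by
      intro u; rcases le_or_gt 0 u with h | h <;> nlinarith
    nlinarith [this u, this v, sq_nonneg t]
  obtain ⟨n, hn⟩ := Int.eq_ofNat_of_zero_le hn
  rw [hn, hb] at hQ
  rw [hb] at hab
  have hab' : a < b := by exact_mod_cast hab
  rw [qq] at hQ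
  obtain ⟨s1, s2, hd, hR⟩ := combine_back _ _ _ _ _ (cS_ne _ _ _ _ _) n hQ
  obtain ⟨hg0, hg1⟩ := cR_range _ _ _ _ _ _ _ _ _ (zMu_pos ν (2 ^ e) b (by positivity) (by omega)) hR
  obtain ⟨g, rfl⟩ := Int.eq_ofNat_of_zero_le hg0
  obtain ⟨X, Y, μ, hX, hY, hμ, hX1, hY1, hbμ, -, hiff⟩ := code_core P hP e hβ a b g hab' hg1
  rw [← hX, ← hY, ← hμ] at s1 s2 hd hR
  obtain ⟨-, -, hpow, hdvd⟩ := bridge_back X Y b μ hX1 hY1 (by omega) hbμ g l w h k x y s1 s2 hd hR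
  obtain ⟨z, -, -, hz⟩ := (hiff hpow).1 hdvd
  exact ⟨fun i => z i, hz⟩

theorem pow_choice (a m : ℕ) : ∃ j : ℕ, m < 2 ^ j ∧ ((2 * a + 3 : ℕ) : ℤ) ∣ (2 : ℤ) ^ j - (a + 2) := by
  have hcop : Nat.Coprime 2 (2 * a + 3) := by
    rw [Nat.coprime_two_left]; exact ⟨a + 1, by ring⟩
  have hφ : 0 < Nat.totient (2 * a + 3) := Nat.totient_pos.2 (by omega)
  obtain ⟨j, hj⟩ : ∃ j, Nat.totient (2 * a + 3) * (m + 1) = j + 1 :=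
    ⟨Nat.totient (2 * a + 3) * (m + 1) - 1, by
      have : 0 < Nat.totient (2 * a + 3) * (m + 1) := Nat.mul_pos hφ (Nat.succ_pos m)
      omega⟩
  refine ⟨j, ?_, ?_⟩
  · have : m ≤ j := by nlinarith
    exact lt_of_le_of_lt this Nat.lt_two_pow_self
  · have h1 := (Nat.ModEq.pow_totient hcop).pow (m + 1)
    rw [← pow_mul, hj, one_pow] at h1
    have h2 : ((2 * a + 3 : ℕ) : ℤ) ∣ (2:ℤ) ^ (j + 1) - 1 := by
      have := (Nat.modEq_iff_dvd.1 h1.symm)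
      push_cast at this ⊢
      exact this
    have h3 : IsCoprime ((2 * a + 3 : ℕ) : ℤ) (2 : ℤ) := by
      have := (Nat.isCoprime_iff_coprime.2 hcop.symm)
      exact_mod_cast this
    apply h3.dvd_of_dvd_mul_left
    have e : (2:ℤ) * (2 ^ j - (a + 2)) = (2 ^ (j + 1) - 1) - ((2 * a + 3 : ℕ) : ℤ) := by
      push_cast; ring
    rw [e]
    exact dvd_sub h2 dvd_rfl

theorem sem_fwd {ν : ℕ} (P : MvPolynomial (Fin (ν + 1)) ℤ) (hP : P.totalDegree ≤ 4) (e : ℕ)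
    (hβ : 16 * Lam P < 2 ^ e) (a : ℕ) (z : Fin ν → ℕ)
    (hz : MvPolynomial.eval (Fin.cons (a : ℤ) (fun i => (z i : ℤ))) P = 0) :
    ∃ f g h k l w x y u v t : ℤ, QQ P (2 ^ e) (a : ℤ) f g h k l w x y u v t = 0 := by
  obtain ⟨j, hj1, f, hf⟩ := pow_choice a (a + ∑ i, z i)
  have hc : zc (a : ℤ) f = 2 ^ j := by
    rw [zc]; push_cast at hf; linarith
  have hcb : zc (a : ℤ) f ^ 2 = ((4 ^ j : ℕ) : ℤ) := by
    rw [hc, ← pow_mul, mul_comm, pow_mul]; push_cast; norm_num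
  have h24 : 2 ^ j ≤ 4 ^ j := Nat.pow_le_pow_left (by norm_num) j
  have hzb : ∀ i, z i < 4 ^ j := by
    intro i
    have := Finset.single_le_sum (f := z) (fun _ _ => Nat.zero_le _) (Finset.mem_univ i)
    omega
  have hab : a < 4 ^ j := by omega
  let z' : ℕ → ℕ := fun i => if hi : i < ν then z ⟨i, hi⟩ else 0
  have hz' : (fun i : Fin ν => (z' i : ℤ)) = fun i => (z i : ℤ) := by
    funext i; simp [z']
  have hz'b : ∀ i < ν, z' i < 4 ^ j := by
    intro i hi; simp only [z', hi, dif_pos]; exact hzb _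
  have he : StrictMono (fun j : ℕ => 5 ^ (j + 1)) := by
    intro x y hxy
    exact Nat.pow_lt_pow_right (by norm_num) (by omega)
  set B : ℕ := 2 * (2 ^ e * (4 ^ j) ^ 4) with hB
  have hzB : zB (2 ^ e) ((4 ^ j : ℕ) : ℤ) = (B : ℤ) := by
    rw [zB, zH, hB]; push_cast; ring
  have hBb : 4 ^ j ≤ B := by
    calc 4 ^ j ≤ (4 ^ j) ^ 4 := Nat.le_self_pow (by norm_num) _
      _ ≤ 2 ^ e * (4 ^ j) ^ 4 := Nat.le_mul_of_pos_left _ (by positivity)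
      _ ≤ B := by omega
  have hglt := digits_lt B (by omega) (fun j : ℕ => 5 ^ (j + 1)) he z' ν (fun i hi => by have := hz'b i hi; omega)
  obtain ⟨g, hg⟩ : ∃ g, g = ∑ i ∈ Finset.range ν, z' i * B ^ (5 ^ (i + 1)) := ⟨_, rfl⟩
  have hg1 : (g : ℤ) < zMu ν (2 ^ e) ((4 ^ j : ℕ) : ℤ) := by
    rw [zMu, hzB, hg]; exact_mod_cast hglt
  obtain ⟨X, Y, μ, hX, hY, hμ, hX1, hY1, hbμ, hbX, hiff⟩ := code_core P hP e hβ a (4 ^ j) g hab hg1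
  have hdvd : Y ∣ Nat.centralBinom X := by
    refine (hiff ⟨2 * j, by rw [pow_mul]; norm_num⟩).2 ⟨z', hz'b, ?_, ?_⟩
    · rw [hzB, hg]; push_cast; rfl
    · rw [hz']; exact hz
  have hjX : j ≤ X := (Nat.lt_pow_self (by norm_num : 1 < 4)).le.trans hbX
  obtain ⟨l, w, h, k, x, y, s1, s2, hd, hR⟩ := bridge_fwd X Y μ j hX1 hY1 hjX hbμ g (by positivity)
    (by rw [hμ]; exact hg1) hdvd
  obtain ⟨n, hn⟩ := combine_fwd _ _ _ _ _ (cS_ne _ _ _ _ _) s1 s2 hd hR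
  obtain ⟨u, v, t, hu⟩ := three_squares' n
  refine ⟨f, g, h, k, l, w, x, y, u, v, t, ?_⟩
  rw [QQ, hcb, qq, ← hX, ← hY, ← hμ, ← hu]
  exact hn

end UP


namespace UP
open MvPolynomial

def DB {σ : Type*} (p : MvPolynomial σ ℤ) (d : ℕ) : Prop := p.totalDegree ≤ d

section
variable {σ : Type*} {p q : MvPolynomial σ ℤ} {c d : ℕ}
theorem DB.mono (hp : DB p c) (h : c ≤ d) : DB p d := le_trans (show p.totalDegree ≤ c from hp) h
theorem DB.add (hp : DB p c) (hq : DB q d) : DB (p + q) (max c d) :=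
  (totalDegree_add p q).trans (max_le_max hp hq)
theorem DB.sub (hp : DB p c) (hq : DB q d) : DB (p - q) (max c d) :=
  (totalDegree_sub p q).trans (max_le_max hp hq)
theorem DB.mul (hp : DB p c) (hq : DB q d) : DB (p * q) (c + d) :=
  (totalDegree_mul p q).trans (Nat.add_le_add hp hq)
theorem DB.pow (n : ℕ) (hp : DB p c) : DB (p ^ n) (n * c) :=
  (totalDegree_pow p n).trans (Nat.mul_le_mul_left n hp)
theorem DB.natCast (n : ℕ) : DB (n : MvPolynomial σ ℤ) 0 := by
  rw [DB, ← map_natCast (C : ℤ →+* MvPolynomial σ ℤ), totalDegree_C]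
theorem DB.intCast (n : ℤ) : DB (n : MvPolynomial σ ℤ) 0 := by
  rw [DB, ← eq_intCast (C : ℤ →+* MvPolynomial σ ℤ), totalDegree_C]
theorem DB.ofNat (n : ℕ) [n.AtLeastTwo] : DB (OfNat.ofNat n : MvPolynomial σ ℤ) 0 := by
  have e : (OfNat.ofNat n : MvPolynomial σ ℤ) = ((n : ℕ) : MvPolynomial σ ℤ) := (Nat.cast_ofNat (n := n)).symm
  rw [e]; exact DB.natCast n
theorem DB.one : DB (1 : MvPolynomial σ ℤ) 0 := by
  have := DB.natCast (σ := σ) 1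
  rwa [Nat.cast_one] at this
theorem DB.sum {ι : Type*} (s : Finset ι) (f : ι → MvPolynomial σ ℤ) (h : ∀ i ∈ s, DB (f i) d) :
    DB (∑ i ∈ s, f i) d := (totalDegree_finsetSum s f).trans (Finset.sup_le h)
theorem DB.X (i : σ) : DB (X i : MvPolynomial σ ℤ) 1 := (totalDegree_X i).le
end

section
variable {σ : Type*}
/-- degree of the coding polynomials -/
theorem DB_B (β : ℕ) (b : MvPolynomial σ ℤ) (hb : DB b 4) : DB (zB β b) 16 :=
  ((DB.ofNat 2).mul ((DB.natCast β).mul (hb.pow 4))).mono (by norm_num)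
theorem DB_H (β : ℕ) (b : MvPolynomial σ ℤ) (hb : DB b 4) : DB (zH β b) 16 :=
  ((DB.natCast β).mul (hb.pow 4)).mono (by norm_num)
theorem DB_Mu (ν β L : ℕ) (hL : L = 5 ^ (ν + 1)) (b : MvPolynomial σ ℤ) (hb : DB b 4) : DB (zMu ν β b) (16 * L) := by
  rw [zMu, ← hL]
  exact ((DB_B β b hb).pow L).mono (by omega)
theorem DB_N (ν β L : ℕ) (hL : L = 5 ^ (ν + 1)) (b : MvPolynomial σ ℤ) (hb : DB b 4) : DB (zN ν β b) (96 * L + 32) := by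
  rw [zN, ← hL]
  exact ((DB_B β b hb).pow _).mono (by omega)
theorem DB_Y (ν β L : ℕ) (hL : L = 5 ^ (ν + 1)) (b : MvPolynomial σ ℤ) (hb : DB b 4) : DB (zY ν β b) (192 * L + 64) :=
  ((DB_N ν β L hL b hb).pow 2).mono (by omega)
theorem DB_T (ν β L : ℕ) (hL : L = 5 ^ (ν + 1)) (b : MvPolynomial σ ℤ) (hb : DB b 4) : DB (zT ν β b) (32 * L + 20) := by
  have hM : DB (zM ν β b) (16 * L + 4) := by
    refine DB.mono (((DB_Mu ν β L hL b hb).sub DB.one).sub ((hb.sub DB.one).mul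
      (DB.sum (d := 16 * L) _ _ ?_))) (by omega)
    intro j hj
    refine DB.mono ((DB_B β b hb).pow _) ?_
    have : 5 ^ (j + 1) ≤ L := by
      rw [hL]; exact Nat.pow_le_pow_right (by norm_num) (by have := Finset.mem_range.1 hj; omega)
    omega
  exact DB.mono (hM.add ((DB_Mu ν β L hL b hb).mul (((DB_H β b hb).sub DB.one).mul (DB_Mu ν β L hL b hb)))) (by omega)
theorem DB_X {ν : ℕ} (P : MvPolynomial (Fin (ν + 1)) ℤ) (β L : ℕ) (hL : L = 5 ^ (ν + 1)) (b a g : MvPolynomial σ ℤ)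
    (hb : DB b 4) (ha : DB a 1) (hg : DB g 1) : DB (zX P β b a g) (288 * L + 148) := by
  have hD : DB (Dv P (zB β b)) (16 * L) := by
    apply DB.sum
    intro s _
    refine DB.mono ((DB.intCast _).mul ((DB_B β b hb).pow _)) ?_
    have : 5 ^ (ν + 1) - wt s ≤ L := by omega
    omega
  have hK : DB (zK P β b a g) (80 * L + 84) := by
    refine DB.mono (((((DB.one.add (ha.mul (DB_B β b hb))).add hg).pow 4).mul hD).add ((DB_H β b hb).mul
      (DB.sum (d := 80 * L) _ _ ?_))) (by omega)
    intro j hj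
    rw [← hL] at hj
    refine DB.mono ((DB_B β b hb).pow _) ?_
    have := Finset.mem_range.1 hj
    omega
  have hS : DB (zS P β b a g) (96 * L + 84) := DB.mono (hg.add ((DB_Mu ν β L hL b hb).mul hK)) (by omega)
  have hN := DB_N ν β L hL b hb
  have hT := DB_T ν β L hL b hb
  exact DB.mono ((hN.sub DB.one).mul (((((hS.add hT).add DB.one).mul hN).add hT).add DB.one)) (by omega)

end

theorem DB_rest {σ : Type*} (d : ℕ) (X Y μ b g l w h k x y n : MvPolynomial σ ℤ) (hX : DB X d) (hY : DB Y d) (hμ : DB μ d)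
    (hb : DB b 4) (hg : DB g 1) (hl : DB l 1) (hw : DB w 1) (hh : DB h 1) (hk : DB k 1) (hx : DB x 1) (hy : DB y 1)
    (hn : DB n 2) :
    DB (rM (cA1 X Y μ l w h x y) (cA2 X Y μ l w k) (cS X Y μ l w) (cT X Y μ b l w h) (cR X Y μ g l w h k x) n)
      (100000 * d + 100000) := by
  have hbV : DB (bV Y μ w) (3 * d + 2) :=
    DB.mono ((((DB.ofNat 64).mul hY).mul (hμ.pow 2)).mul ((hw.pow 2).add DB.one)) (by omega)
  have hbu : DB (bu X Y l) (4 * d + 2) :=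
    DB.mono ((((DB.ofNat 16).mul (hl.pow 2)).mul (hX.pow 2)).mul (hY.pow 2)) (by omega)
  have hba : DB (ba X Y μ l w) (7 * d + 4) := DB.mono (hbu.mul (hbV.add DB.one)) (by omega)
  have hba2 : DB (ba2 X Y μ l w) (11 * d + 6) := DB.mono (((DB.ofNat 2).mul (hbu.pow 2)).mul hbV) (by omega)
  have hbC : DB (bC X Y μ l w h) (7 * d + 5) :=
    DB.mono ((((DB.ofNat 2).mul hX).add DB.one).add ((hba.sub DB.one).mul hh)) (by omega)
  have hbJ : DB (bJ X Y μ l w k) (11 * d + 7) :=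
    DB.mono ((hX.add DB.one).add ((hba2.sub DB.one).mul hk)) (by omega)
  have hD' : ∀ (p q : MvPolynomial σ ℤ) (c1 c2 : ℕ), DB p c1 → DB q c2 → DB (pD p q) (2 * c1 + 2 * c2) := by
    intro p q c1 c2 hp hq
    exact DB.mono ((((hp.pow 2).sub DB.one).mul (hq.pow 2)).add DB.one) (by omega)
  have hD := hD' _ _ _ _ hba hbC
  have hE : DB (pE (ba X Y μ l w) (bC X Y μ l w h) x) (42 * d + 29) :=
    DB.mono (((hbC.pow 2).mul hD).mul hx) (by omega)
  have hF := hD' _ _ _ _ hba hE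
  have hG : DB (pG (ba X Y μ l w) (pD (ba X Y μ l w) (pE (ba X Y μ l w) (bC X Y μ l w h) x))) (196 * d + 132) :=
    DB.mono (hba.add (hF.mul (hF.sub hba))) (by omega)
  have hH : DB (pH (2 * X + 1) (bC X Y μ l w h) (pD (ba X Y μ l w) (pE (ba X Y μ l w) (bC X Y μ l w h) x)) y)
      (105 * d + 72) :=
    DB.mono (hbC.add (hF.mul ((((DB.ofNat 2).mul hX).add DB.one).add (hy.mul hbC)))) (by omega)
  have hI := hD' _ _ _ _ hG hH
  have hA1 : DB (cA1 X Y μ l w h x y) (728 * d + 492) := DB.mono ((hD.mul hF).mul hI) (by omega)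
  have hA2 : DB (cA2 X Y μ l w k) (44 * d + 26) := DB.mono (hD' _ _ _ _ hba2 hbJ) (by omega)
  have hS : DB (cS X Y μ l w) (7 * d + 4) := DB.mono (((DB.ofNat 4).mul hba).sub (DB.ofNat 5)) (by omega)
  have hbw : DB (2 * b * w ^ 2) 6 := DB.mono (((DB.ofNat 2).mul hb).mul (hw.pow 2)) (by omega)
  have hT : DB (cT X Y μ b l w h) (14 * d + 20) :=
    DB.mono (((hbw.pow 2).sub DB.one).add ((((DB.ofNat 2).mul hbw).mul hbC).mul (hba.sub (DB.ofNat 2)))) (by omega)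
  have hR : DB (cR X Y μ g l w h k x) (26 * d + 30) :=
    DB.mono (((hx.pow 2).mul (hl.pow 2)).mul ((((hbJ.pow 2).mul (hμ.pow 2)).sub
      (((DB.ofNat 16).mul (hμ.pow 2)).mul ((hbC.sub ((hl.mul hY).mul hbJ)).pow 2))).sub
      ((hbJ.pow 2).mul (((((DB.ofNat 2).mul hg).add DB.one).sub hμ).pow 2)))) (by omega)
  generalize cA1 X Y μ l w h x y = A1 at *
  generalize cA2 X Y μ l w k = A2 at *
  generalize cS X Y μ l w = S at *
  generalize cT X Y μ b l w h = T at *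
  generalize cR X Y μ g l w h k x = R at *
  have hW : DB (rW A1 A2) (1456 * d + 984) := DB.mono ((DB.one.add (hA1.pow 2)).add (hA2.pow 2)) (by omega)
  have hq : DB (rq S R) (40 * d + 38) := DB.mono ((hS.pow 2).mul (((DB.ofNat 2).mul hR).sub DB.one)) (by omega)
  have hp : DB (rp A1 A2 S T R n) (2952 * d + 2100) :=
    DB.mono ((((hS.pow 2).mul hn).add (hT.pow 2)).sub (hq.mul ((hT.pow 2).add (hW.pow 2)))) (by omega)
  exact DB.mono (((hp.pow 4).sub ((((DB.ofNat 2).mul (hp.pow 2)).mul (hq.pow 2)).mul (hA1.add (hA2.mul (hW.pow 2))))).add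
    ((hq.pow 4).mul ((hA1.sub (hA2.mul (hW.pow 2))).pow 2))) (by omega)

theorem DB_QQ {σ : Type*} {ν : ℕ} (P : MvPolynomial (Fin (ν + 1)) ℤ) (β : ℕ) (a f g h k l w x y u v t : MvPolynomial σ ℤ)
    (ha : DB a 1) (hf : DB f 1)
    (hg : DB g 1) (hl : DB l 1) (hw : DB w 1) (hh : DB h 1) (hk : DB k 1) (hx : DB x 1) (hy : DB y 1)
    (hu : DB u 1) (hv : DB v 1) (ht : DB t 1) :
    DB (QQ P β a f g h k l w x y u v t) (100000 * (288 * 5 ^ (ν + 1) + 148) + 100000) := by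
  have hb : DB (zc a f ^ 2) 4 :=
    DB.mono ((((((DB.ofNat 2).mul ha).add (DB.ofNat 3)).mul hf).add (ha.add (DB.ofNat 2))).pow 2) (by omega)
  have hn : DB (u ^ 2 + u + v ^ 2 + v + t ^ 2) 2 :=
    DB.mono (((((hu.pow 2).add hu).add (hv.pow 2)).add hv).add (ht.pow 2)) (by omega)
  exact DB_rest _ _ _ _ _ _ _ _ _ _ _ _ _ (DB_X P β _ rfl _ _ _ hb ha hg) ((DB_Y ν β _ rfl _ hb).mono (by omega))
    ((DB_Mu ν β _ rfl _ hb).mono (by omega)) hb hg hl hw hh hk hx hy hn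

section map
variable {R S : Type*} [CommRing R] [CommRing S] (φ : R →+* S)

theorem map_zH (β : ℕ) (b : R) : φ (zH β b) = zH β (φ b) := by simp [zH]
theorem map_zB (β : ℕ) (b : R) : φ (zB β b) = zB β (φ b) := by rw [zB, zB, map_mul, map_zH, map_ofNat]
theorem map_zMu (ν β : ℕ) (b : R) : φ (zMu ν β b) = zMu ν β (φ b) := by rw [zMu, zMu, map_pow, map_zB]
theorem map_zN (ν β : ℕ) (b : R) : φ (zN ν β b) = zN ν β (φ b) := by rw [zN, zN, map_pow, map_zB]
theorem map_zY (ν β : ℕ) (b : R) : φ (zY ν β b) = zY ν β (φ b) := by rw [zY, zY, map_pow, map_zN]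
theorem map_zM (ν β : ℕ) (b : R) : φ (zM ν β b) = zM ν β (φ b) := by
  simp only [zM, map_sub, map_mul, map_sum, map_pow, map_one, map_zMu, map_zB]
theorem map_zT (ν β : ℕ) (b : R) : φ (zT ν β b) = zT ν β (φ b) := by
  simp only [zT, map_add, map_sub, map_mul, map_one, map_zMu, map_zM, map_zH]
theorem map_Dv {n : ℕ} (P : MvPolynomial (Fin n) ℤ) (B : R) : φ (Dv P B) = Dv P (φ B) := by
  simp only [Dv, map_sum, map_mul, map_pow, map_intCast]
theorem map_zX {ν : ℕ} (P : MvPolynomial (Fin (ν + 1)) ℤ) (β : ℕ) (b a g : R) :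
    φ (zX P β b a g) = zX P β (φ b) (φ a) (φ g) := by
  simp only [zX, zS, zK, map_add, map_sub, map_mul, map_one, map_pow, map_sum, map_zMu, map_zT, map_zH, map_zN, map_zB, map_Dv]
theorem map_QQ {ν : ℕ} (P : MvPolynomial (Fin (ν + 1)) ℤ) (β : ℕ) (a f g h k l w x y u v t : R) :
    φ (QQ P β a f g h k l w x y u v t) =
      QQ P β (φ a) (φ f) (φ g) (φ h) (φ k) (φ l) (φ w) (φ x) (φ y) (φ u) (φ v) (φ t) := by
  simp only [QQ, qq, zc, rM, rp, rq, rW, cA1, cA2, cS, cT, cR, bC, bJ, ba, ba2, bu, bV, pDFI, pD, pE, pG, pH,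
    map_add, map_sub, map_mul, map_one, map_pow, map_ofNat, map_zX, map_zY, map_zMu]
end map

theorem final {ν : ℕ} (P : MvPolynomial (Fin (ν + 1)) ℤ) (hP : P.totalDegree ≤ 4) :
    ∃ Q : MvPolynomial (Fin 12) ℤ, Q.totalDegree ≤ 100000 * (288 * 5 ^ (ν + 1) + 148) + 100000 ∧
      ∀ a : ℕ, (∃ z : Fin ν → ℕ, MvPolynomial.eval (Fin.cons (a : ℤ) (fun i => (z i : ℤ))) P = 0) ↔
        ∃ z : Fin 11 → ℤ, MvPolynomial.eval (Fin.cons (a : ℤ) z) Q = 0 := by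
  have hβ : 16 * Lam P < 2 ^ (16 * Lam P) := Nat.lt_two_pow_self
  refine ⟨QQ P (2 ^ (16 * Lam P)) (X 0) (X 1) (X 2) (X 3) (X 4) (X 5) (X 6) (X 7) (X 8) (X 9) (X 10) (X 11), ?_, ?_⟩
  · exact DB_QQ P _ _ _ _ _ _ _ _ _ _ _ _ _ (DB.X _) (DB.X _) (DB.X _) (DB.X _) (DB.X _) (DB.X _) (DB.X _) (DB.X _)
      (DB.X _) (DB.X _) (DB.X _) (DB.X _)
  · intro a
    constructor
    · rintro ⟨z, hz⟩
      obtain ⟨f, g, h, k, l, w, x, y, u, v, t, hQ⟩ := sem_fwd P hP _ hβ a z hz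
      refine ⟨![f, g, h, k, l, w, x, y, u, v, t], ?_⟩
      rw [map_QQ]
      simp only [eval_X]
      exact hQ
    · rintro ⟨z, hz⟩
      rw [map_QQ] at hz
      simp only [eval_X] at hz
      exact sem_back P hP _ hβ a _ _ _ _ _ _ _ _ _ _ _ hz

end UP

/-- If `(58, 4)` is a universal pair over `ℕ`, then
`(11, 1681043235226619916301182624511918527834137733707408448335539840)`
is a universal pair over `ℤ`. -/
theorem universal_pair_58_4 (h : IsUniversalPairNat 58 4) :
    IsUniversalPairInt 11
      1681043235226619916301182624511918527834137733707408448335539840 := by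
  intro A hA
  obtain ⟨P, hP, hPA⟩ := h A hA
  obtain ⟨Q, hQ, hQA⟩ := UP.final P hP
  exact ⟨Q, hQ.trans (by norm_num), fun a => (hPA a).trans (hQA a)⟩
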